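/- arXiv:1704.02921 — 5 statements merged into one kernel-verified Lean document; each statement's English description precedes it below -/
import Mathlib

section
/- Let P be a path on n vertices whose vertex set is partitioned into m subsets V_1,...,V_m. Then there exist two disjoint independent sets S_1 and S_2 of P such that |S_1| + |S_2| = n - m, the sizes |S_1| and |S_2| differ by at most one, |S_1 ∩ V_j| + |S_2 ∩ V_j| = |V_j| - 1 for every j ∈ [m], and |S_i ∩ V_j| ≥ |V_j|/2 - 1 for every i ∈ {1,2} and j ∈ [m]. -/
open Classical in
/-- The number modulo 2 of ways to delete from the word `w` exactly one occurrence of each letter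
of `J` and no other letter so that, when the remaining letters are given the alternating signs
`s, -s, s, …`, the sum of the signs of each letter `j` is `v j`. -/
noncomputable def deletionCount {ι : Type*} : List ι → Finset ι → ℤ → (ι → ℤ) → ZMod 2
  | [], J, _, v => if J = ∅ ∧ v = 0 then 1 else 0
  | c :: w, J, s, v => deletionCount w J (-s) (v - Pi.single c s) +
      if c ∈ J then deletionCount w (J.erase c) s v else 0

section deletionCount

variable {ι : Type*}

open Classical in
lemma deletionCount_append_swap (u x : List ι) (a b : ι) (J : Finset ι) (s : ℤ) (v : ι → ℤ) :
    deletionCount (u ++ a :: b :: x) J s v + deletionCount (u ++ b :: a :: x) J s v =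
      deletionCount (u ++ x) J s (v - (Pi.single a s - Pi.single b s)) +
      deletionCount (u ++ x) J s (v + (Pi.single a s - Pi.single b s)) := by
  induction u generalizing J s v with
  | nil =>
    simp only [List.nil_append, deletionCount, neg_neg, Finset.mem_erase]
    rw [Finset.erase_right_comm (a := b) (b := a),
      show v - Pi.single a s - Pi.single b (-s) = v - (Pi.single a s - Pi.single b s) by
        rw [Pi.single_neg]; abel,
      show v - Pi.single b s - Pi.single a (-s) = v + (Pi.single a s - Pi.single b s) by
        rw [Pi.single_neg]; abel]
    have h2 : (2 : ZMod 2) = 0 := rfl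
    have h4 : (4 : ZMod 2) = 0 := rfl
    by_cases ha : a ∈ J <;> by_cases hb : b ∈ J <;> by_cases hab : a = b <;>
      simp [ha, hb, hab, Ne.symm] <;> ring_nf <;> simp [h2, h4]
  | cons c u ih =>
    simp only [List.cons_append, deletionCount]
    have h1 := ih J (-s) (v - Pi.single c s)
    have h2 := ih (J.erase c) s v
    rw [show v - Pi.single c s - (Pi.single a (-s) - Pi.single b (-s)) =
        v + (Pi.single a s - Pi.single b s) - Pi.single c s by simp only [Pi.single_neg]; abel,
      show v - Pi.single c s + (Pi.single a (-s) - Pi.single b (-s)) =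
        v - (Pi.single a s - Pi.single b s) - Pi.single c s by
          simp only [Pi.single_neg]; abel] at h1
    split_ifs
    · linear_combination h1 + h2
    · linear_combination h1

open Classical in
lemma deletionCount_append_self (u x : List ι) (a : ι) (J : Finset ι) (s : ℤ) (v : ι → ℤ) :
    deletionCount (u ++ a :: a :: x) J s v = deletionCount (u ++ x) J s v := by
  induction u generalizing J s v with
  | nil =>
    have h2 : (2 : ZMod 2) = 0 := rfl
    simp only [List.nil_append, deletionCount, neg_neg, Finset.mem_erase]
    rw [show v - Pi.single a s - Pi.single a (-s) = v by rw [Pi.single_neg]; abel]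
    by_cases ha : a ∈ J
    · simp only [ha, if_true, not_true, ne_eq, false_and, if_false]
      linear_combination deletionCount x (J.erase a) (-s) (v - Pi.single a s) * h2
    · simp [ha]
  | cons c u ih => simp only [List.cons_append, deletionCount, ih]

open Classical in
lemma deletionCount_eq_zero {w : List ι} {J : Finset ι} (h : ¬ J ⊆ w.toFinset) (s : ℤ)
    (v : ι → ℤ) : deletionCount w J s v = 0 := by
  induction w generalizing J s v with
  | nil =>
    have : J ≠ ∅ := by rintro rfl; simp at h
    simp [deletionCount, this]
  | cons c w ih =>
    rw [deletionCount, ih (fun h' => h (h'.trans (by simp))), zero_add, ite_eq_right_iff]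
    exact fun _ => ih (fun h' => h fun y hy => by
      by_cases hyc : y = c
      · simp [hyc]
      · simpa [hyc] using h' (Finset.mem_erase.2 ⟨hyc, hy⟩)) _ _

open Classical in
lemma deletionCount_of_nodup {w : List ι} (hw : w.Nodup) (s : ℤ) (v : ι → ℤ) :
    deletionCount w w.toFinset s v = if v = 0 then 1 else 0 := by
  induction w generalizing s v with
  | nil => simp [deletionCount]
  | cons c w ih =>
    obtain ⟨hc, hw⟩ := List.nodup_cons.1 hw
    rw [deletionCount, deletionCount_eq_zero (fun h => hc (by simpa using h (by simp))),
      if_pos (by simp), List.toFinset_cons, Finset.erase_insert (by simpa using hc), ih hw,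
      zero_add]

open Classical in
/-- The number of deletions of one occurrence of each letter from `w` is modulo 2 an even function
of the sums of signs, and its value at zero sums is 1 exactly when each letter occurs an odd number
of times. -/
def IsBalancedWord [Fintype ι] (w : List ι) : Prop :=
  ∀ (s : ℤ) (v : ι → ℤ),
    deletionCount w Finset.univ s (-v) = deletionCount w Finset.univ s v ∧
    deletionCount w Finset.univ s 0 = if ∀ c, Odd (w.count c) then 1 else 0

variable [Fintype ι]

lemma IsBalancedWord.append_swap {u x : List ι} {a b : ι} (hux : IsBalancedWord (u ++ x))
    (h : IsBalancedWord (u ++ a :: b :: x)) : IsBalancedWord (u ++ b :: a :: x) := by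
  classical
  intro s v
  have key := deletionCount_append_swap u x a b Finset.univ s
  have h2 : (2 : ZMod 2) = 0 := rfl
  refine ⟨?_, ?_⟩
  · have e1 := (hux s (v - (Pi.single a s - Pi.single b s))).1
    have e2 := (hux s (v + (Pi.single a s - Pi.single b s))).1
    rw [show -(v - (Pi.single a s - Pi.single b s)) =
      -v + (Pi.single a s - Pi.single b s) by abel] at e1
    rw [show -(v + (Pi.single a s - Pi.single b s)) =
      -v - (Pi.single a s - Pi.single b s) by abel] at e2
    linear_combination key (-v) - key v - (h s v).1 + e1 + e2
  · have e1 := (hux s (Pi.single a s - Pi.single b s)).1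
    have hc : ∀ c, (u ++ b :: a :: x).count c = (u ++ a :: b :: x).count c := fun c =>
      List.Perm.count_eq ((List.Perm.swap _ _ _).append_left u) c
    have k0 := key 0
    rw [zero_sub, zero_add] at k0
    have e3 := (h s 0).2
    simp only [hc]
    rw [← e3]
    linear_combination k0 + e1 + (deletionCount (u ++ x) Finset.univ s
      (Pi.single a s - Pi.single b s) - deletionCount (u ++ a :: b :: x) Finset.univ s 0) * h2

lemma IsBalancedWord.append_perm {w w' : List ι} (hp : w.Perm w') (u : List ι)
    (hshort : ∀ x : List ι, x.length < (u ++ w).length → IsBalancedWord x)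
    (h : IsBalancedWord (u ++ w)) : IsBalancedWord (u ++ w') := by
  induction hp generalizing u with
  | nil => exact h
  | cons c _ ih =>
    rw [List.append_cons] at h ⊢
    exact ih _ (by simpa [List.append_assoc] using hshort) h
  | swap a b l => exact IsBalancedWord.append_swap (hshort _ (by simp)) h
  | trans h₁ h₂ ih₁ ih₂ =>
    exact ih₂ u (by simpa [h₁.length_eq] using hshort) (ih₁ u hshort h)

lemma isBalancedWord_of_nodup {w : List ι} (hw : w.Nodup) : IsBalancedWord w := by
  classical
  intro s v
  by_cases huniv : w.toFinset = Finset.univ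
  · have hodd : ∀ c, Odd (w.count c) := fun c => by
      have : c ∈ w.toFinset := huniv ▸ Finset.mem_univ c
      rw [List.count_eq_one_of_mem hw (by simpa using this)]
      exact odd_one
    rw [← huniv, deletionCount_of_nodup hw, deletionCount_of_nodup hw, deletionCount_of_nodup hw]
    refine ⟨by simp, ?_⟩
    rw [if_pos rfl, if_pos]
    convert hodd
  · have h0 := fun v => deletionCount_eq_zero
      (fun h => huniv (Finset.univ_subset_iff.1 h) : ¬ Finset.univ ⊆ w.toFinset) s v
    refine ⟨by rw [h0, h0], ?_⟩
    rw [h0, if_neg]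
    intro hodd
    refine huniv (Finset.eq_univ_iff_forall.2 fun c => ?_)
    rw [List.mem_toFinset, ← List.count_pos_iff]
    exact (hodd c).pos

lemma isBalancedWord (w : List ι) : IsBalancedWord w := by
  classical
  induction hn : w.length using Nat.strong_induction_on generalizing w with
  | _ n ih =>
    subst hn
    by_cases hw : w.Nodup
    · exact isBalancedWord_of_nodup hw
    · obtain ⟨a, ha⟩ : ∃ a, List.Sublist [a, a] w := by
        simpa [List.nodup_iff_sublist] using hw
      obtain ⟨x, hx⟩ := ha.exists_perm_append
      have hlen : w.length = x.length + 2 := by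
        rw [hx.length_eq, List.length_append, add_comm]; rfl
      have hxb := ih x.length (by omega) x rfl
      refine IsBalancedWord.append_perm (w := a :: a :: x) hx.symm [] (fun y hy => ?_) ?_
      · exact ih y.length (by rw [hlen]; exact hy) y rfl
      · intro s v
        obtain ⟨h₁, h₂⟩ := hxb s v
        have e := fun v => deletionCount_append_self [] x a Finset.univ s v
        simp only [List.nil_append] at e ⊢
        rw [e, e, e]
        refine ⟨h₁, h₂.trans ?_⟩
        congr 1
        refine propext (forall_congr' fun c => ?_)
        simp only [List.count_cons]
        split_ifs
        · rw [add_assoc, Nat.odd_add]; simp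
        · simp

end deletionCount

open Classical in
lemma exists_signs_of_deletionCount {ι : Type*} (l : ℕ) (c : ℕ → ι) (J : Finset ι) {s : ℤ}
    (hs : s ≠ 0) (v : ι → ℤ) (h : deletionCount ((List.range l).map c) J s v ≠ 0) :
    ∃ x : ℕ → ℤ, (∀ i, x i = 0 ∨ x i = s ∨ x i = -s) ∧
      (∀ q ≤ l, ∑ i ∈ Finset.range q, x i = 0 ∨ ∑ i ∈ Finset.range q, x i = s) ∧
      (∀ j, (∑ i ∈ Finset.range l, if c i = j ∧ x i = 0 then 1 else 0) = if j ∈ J then 1 else 0) ∧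
      ∀ j, (∑ i ∈ Finset.range l, if c i = j then x i else 0) = v j := by
  induction l generalizing c J s v with
  | zero =>
    obtain ⟨rfl, rfl⟩ : J = ∅ ∧ v = 0 := by simpa [deletionCount] using h
    exact ⟨0, by simp⟩
  | succ l ih =>
    rw [List.range_succ_eq_map, List.map_cons, List.map_map, deletionCount] at h
    by_cases hkeep : deletionCount ((List.range l).map (c ∘ Nat.succ)) J (-s)
        (v - Pi.single (c 0) s) = 0
    · rw [hkeep, zero_add, ite_ne_right_iff] at h
      obtain ⟨hJ, h⟩ := h
      obtain ⟨x, h₁, h₂, h₃, h₄⟩ := ih _ _ hs _ h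
      refine ⟨fun i => Nat.casesOn i 0 x, ?_, ?_, ?_, ?_⟩
      · rintro (_ | i)
        · simp
        · exact h₁ i
      · rintro (_ | q) hq
        · simp
        · simpa [Finset.sum_range_succ'] using h₂ q (by omega)
      · intro j
        have := h₃ j
        simp only [Function.comp_apply, Nat.succ_eq_add_one] at this
        rw [Finset.sum_range_succ']
        simp only [this, Finset.mem_erase]
        by_cases hj : c 0 = j
        · subst hj; simp [hJ]
        · simp [hj, Ne.symm hj]
      · intro j
        rw [Finset.sum_range_succ', ← h₄ j]
        simp
    · obtain ⟨x, h₁, h₂, h₃, h₄⟩ := ih _ _ (neg_ne_zero.2 hs) _ hkeep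
      refine ⟨fun i => Nat.casesOn i s x, ?_, ?_, ?_, ?_⟩
      · rintro (_ | i)
        · simp
        · have := h₁ i
          rw [neg_neg] at this
          tauto
      · rintro (_ | q) hq
        · simp
        · rw [Finset.sum_range_succ']
          rcases h₂ q (by omega) with h | h
          · right; simpa using h
          · left; simp [h]
      · intro j
        rw [Finset.sum_range_succ', ← h₃ j]
        simp [hs]
      · intro j
        rw [Finset.sum_range_succ']
        have := h₄ j
        simp only [Function.comp_apply, Nat.succ_eq_add_one] at this
        simp only [this]
        by_cases hj : c 0 = j
        · subst hj; simp
        · simp [hj]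

lemma count_map_range {ι : Type*} [BEq ι] [LawfulBEq ι] (l : ℕ) (c : ℕ → ι) (j : ι)
    [DecidablePred (c · = j)] :
    ((List.range l).map c).count j = ((Finset.range l).filter (c · = j)).card := by
  rw [Finset.card_filter]
  induction l with
  | zero => simp
  | succ l ih =>
    rw [List.range_succ, List.map_append, List.count_append, ih, Finset.sum_range_succ]
    simp [List.count_singleton]

/-- If every color occurs an odd number of times, one can delete one vertex of each color so that
alternating signs on the remaining vertices are balanced on each color. -/
lemma exists_balanced_signs_of_odd {ι : Type*} [Fintype ι] [DecidableEq ι] (l : ℕ) (c : ℕ → ι)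
    (hodd : ∀ j, Odd ((Finset.range l).filter (c · = j)).card) :
    ∃ x : ℕ → ℤ, (∀ i, x i = 0 ∨ x i = 1 ∨ x i = -1) ∧
      (∀ q ≤ l, ∑ i ∈ Finset.range q, x i = 0 ∨ ∑ i ∈ Finset.range q, x i = 1) ∧
      (∀ j, (∑ i ∈ Finset.range l, if c i = j ∧ x i = 0 then 1 else 0) = 1) ∧
      ∀ j, (∑ i ∈ Finset.range l, if c i = j then x i else 0) = 0 := by
  classical
  have h := (isBalancedWord ((List.range l).map c) 1 0).2
  rw [if_pos] at h
  · obtain ⟨x, h₁, h₂, h₃, h₄⟩ := exists_signs_of_deletionCount l c Finset.univ one_ne_zero 0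
      (by rw [h]; exact one_ne_zero)
    refine ⟨x, h₁, h₂, fun j => ?_, fun j => ?_⟩
    · convert h₃ j
      simp
    · convert h₄ j
      rfl
  · intro j
    have e := hodd j
    rw [← count_map_range] at e
    convert e

/-- An integer in `[-1, 1]` stays there after adding suitable signs. -/
lemma exists_signs_abs_add_sum_le {ι : Type*} (Z : Finset ι) {a : ℤ} (ha : |a| ≤ 1) :
    ∃ δ : ι → ℤ, (∀ j, δ j = 1 ∨ δ j = -1) ∧ |a + ∑ j ∈ Z, δ j| ≤ 1 := by
  classical
  induction Z using Finset.induction_on with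
  | empty => exact ⟨1, by simp [ha]⟩
  | insert k Z hk ih =>
    obtain ⟨δ, h₁, h₂⟩ := ih
    obtain ⟨d, hd, hd'⟩ : ∃ d : ℤ, (d = 1 ∨ d = -1) ∧ |a + ∑ j ∈ Z, δ j + d| ≤ 1 := by
      rcases le_total 0 (a + ∑ j ∈ Z, δ j) with h | h
      · exact ⟨-1, by simp, by grind⟩
      · exact ⟨1, by simp, by grind⟩
    refine ⟨Function.update δ k d, fun j => ?_, ?_⟩
    · by_cases hj : j = k
      · simpa [hj] using hd
      · simpa [hj] using h₁ j
    · rw [Finset.sum_insert hk, Finset.sum_update_of_notMem hk, Function.update_self]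
      convert hd' using 2
      ring

/-- A coloring of `{0, …, n - 1}` extends by one new vertex `p j` of each color `j ∈ E`. -/
lemma exists_coloring_extension {ι : Type*} (n : ℕ) (c : ℕ → ι) (E : Finset ι) :
    ∃ (c' : ℕ → ι) (p : ι → ℕ), (∀ i < n, c' i = c i) ∧ (∀ j ∈ E, c' (p j) = j) ∧
      ∀ {M : Type} [AddCommMonoid M] (g : ℕ → M),
        ∑ i ∈ Finset.range (n + E.card), g i = ∑ i ∈ Finset.range n, g i + ∑ j ∈ E, g (p j) := by
  classical
  refine ⟨fun i => if i < n then c i else if h : i - n < E.card then E.equivFin.symm ⟨i - n, h⟩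
    else c i, fun j => if h : j ∈ E then n + E.equivFin ⟨j, h⟩ else 0, fun i hi => by simp [hi],
    fun j hj => by simp [hj], fun g => ?_⟩
  rw [Finset.sum_range_add, ← Fin.sum_univ_eq_sum_range (fun k => g (n + k)),
    ← E.equivFin.sum_comp, ← Finset.sum_coe_sort E]
  simp

/-- One can delete one vertex of each color and give the other vertices signs, distinct on
adjacent vertices, that are balanced up to one on each color and in total. -/
lemma exists_almost_balanced_signs {ι : Type*} [Fintype ι] [DecidableEq ι] (n : ℕ) (c : ℕ → ι)
    (hne : ∀ j, ∃ i < n, c i = j) :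
    ∃ x : ℕ → ℤ, (∀ i, x i = 0 ∨ x i = 1 ∨ x i = -1) ∧
      (∀ i, i + 1 < n → x i = x (i + 1) → x i = 0) ∧
      (∀ j, (∑ i ∈ Finset.range n, if c i = j ∧ x i = 0 then 1 else 0) = 1) ∧
      (∀ j, |∑ i ∈ Finset.range n, if c i = j then x i else 0| ≤ 1) ∧
      |∑ i ∈ Finset.range n, x i| ≤ 1 := by
  classical
  set E : Finset ι := Finset.univ.filter fun j => Even ((Finset.range n).filter (c · = j)).card
    with hE
  obtain ⟨c', p, hc', hp, hsum⟩ := exists_coloring_extension n c E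
  have hcolor : ∀ {M : Type} [AddCommMonoid M] (f : ℕ → M) (j : ι),
      (∑ i ∈ Finset.range (n + E.card), if c' i = j then f i else 0) =
        (∑ i ∈ Finset.range n, if c i = j then f i else 0) + if j ∈ E then f (p j) else 0 := by
    intro M _ f j
    rw [hsum]
    congr 1
    · exact Finset.sum_congr rfl fun i hi => by rw [hc' i (Finset.mem_range.1 hi)]
    · rw [← Finset.sum_ite_eq' E j (fun k => f (p k))]
      exact Finset.sum_congr rfl fun k hk => by rw [hp k hk]
  obtain ⟨x, h₁, h₂, h₃, h₄⟩ := exists_balanced_signs_of_odd (n + E.card) c' fun j => by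
    rw [Finset.card_filter, hcolor, ← Finset.card_filter]
    by_cases hj : j ∈ E
    · rw [if_pos hj]
      exact (Finset.mem_filter.1 hj).2.add_one
    · rw [if_neg hj, add_zero, ← Nat.not_even_iff_odd]
      simpa [hE] using hj
  simp only [ite_and, hcolor] at h₃ h₄
  have hnew : |-∑ j ∈ E, x (p j)| ≤ 1 := by
    have e := hsum x
    have e₁ := h₂ _ le_rfl
    have e₂ := h₂ n (by omega)
    rw [abs_neg, abs_le]
    omega
  set Z := E.filter fun j => x (p j) = 0 with hZ
  obtain ⟨δ, hδ, hδsum⟩ := exists_signs_abs_add_sum_le Z hnew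
  have hzeros : ∀ j, j ∈ Z → ∀ i < n, c i = j → x i ≠ 0 := by
    intro j hj i hi hij hxi
    have e := h₃ j
    rw [if_pos (Finset.mem_filter.1 hj).1, if_pos (Finset.mem_filter.1 hj).2, Nat.add_eq_right,
      Finset.sum_eq_zero_iff] at e
    simpa [hij, hxi] using e i (Finset.mem_range.2 hi)
  have hxZ : ∀ j ∈ Z, (∑ i ∈ Finset.range n, if c i = j then x i else 0) = 0 := by
    intro j hj
    have e := h₄ j
    rwa [if_pos (Finset.mem_filter.1 hj).1, (Finset.mem_filter.1 hj).2, add_zero] at e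
  have hr : ∀ j, ∃ r, j ∈ Z → r < n ∧ c r = j ∧ x r = -δ j := by
    intro j
    by_cases hj : j ∈ Z
    · by_contra! hcon
      have e := hxZ j hj
      rw [Finset.sum_congr rfl (g := fun i => if c i = j then δ j else 0)] at e
      · rw [← Finset.sum_filter, Finset.sum_const, smul_eq_zero, Finset.card_eq_zero] at e
        rcases e with e | e
        · obtain ⟨i, hi, hij⟩ := hne j
          exact Finset.notMem_empty i (e ▸ Finset.mem_filter.2 ⟨Finset.mem_range.2 hi, hij⟩)
        · have := hδ j
          omega
      · intro i hi
        rw [Finset.mem_range] at hi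
        split_ifs with hij
        · have a₁ := hzeros j hj i hi hij
          have a₂ := (hcon i).2 hi hij
          have a₃ := hδ j
          have a₄ := h₁ i
          omega
        · rfl
    · exact ⟨0, fun h => absurd h hj⟩
  choose r hr using hr
  set y : ℕ → ℤ := fun i => if c i ∈ Z ∧ i = r (c i) then 0 else x i with hy
  have hyr : ∀ j ∈ Z, y (r j) = 0 := fun j hj => by simp [hy, (hr j hj).2.1, hj]
  have hyx : ∀ j ∈ Z, ∀ i, c i = j → i ≠ r j → y i = x i := fun j hj i hij hir => by
    simp [hy, hij, hir]
  have hyx' : ∀ j ∉ Z, ∀ i, c i = j → y i = x i := fun j hj i hij => by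
    simp [hy, hij, hj]
  have hy0 : ∀ i, y i = 0 ∨ y i = x i := fun i => by
    simp only [hy]
    split_ifs <;> simp
  have hysum : ∀ j, (∑ i ∈ Finset.range n, if c i = j then y i else 0) =
      (if j ∈ E then -x (p j) else 0) + if j ∈ Z then δ j else 0 := by
    intro j
    by_cases hj : j ∈ Z
    · have hjE := (Finset.mem_filter.1 hj).1
      have hrn := Finset.mem_range.2 (hr j hj).1
      have e := hxZ j hj
      rw [← Finset.add_sum_erase _ _ hrn] at e ⊢
      rw [if_pos (hr j hj).2.1, (hr j hj).2.2] at e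
      rw [if_pos hjE, if_pos hj, (Finset.mem_filter.1 hj).2, hyr j hj, Finset.sum_congr rfl
        (g := fun i => if c i = j then x i else 0)]
      · simp only [ite_self]
        linear_combination e
      · intro i hi
        split_ifs with hij
        · exact hyx j hj i hij (Finset.ne_of_mem_erase hi)
        · rfl
    · rw [if_neg hj, Finset.sum_congr rfl (g := fun i => if c i = j then x i else 0)]
      · have e := h₄ j
        split_ifs at e ⊢ <;> linear_combination e
      · intro i _
        split_ifs with hij
        · exact hyx' j hj i hij
        · rfl
  refine ⟨y, fun i => ?_, fun i hi hii => ?_, fun j => ?_, fun j => ?_, ?_⟩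
  · rcases hy0 i with h | h
    · exact Or.inl h
    · exact h ▸ h₁ i
  · have a₁ := h₂ i (by omega)
    have a₂ := h₂ (i + 1) (by omega)
    have a₃ := h₂ (i + 2) (by omega)
    rw [Finset.sum_range_succ] at a₂ a₃
    rw [Finset.sum_range_succ] at a₃
    have a₄ := hy0 i
    have a₅ := hy0 (i + 1)
    omega
  · simp only [ite_and]
    by_cases hj : j ∈ Z
    · rw [Finset.sum_eq_single (r j)]
      · rw [if_pos (hr j hj).2.1, if_pos (hyr j hj)]
      · intro i hi hir
        split_ifs with hij hyi
        · exact absurd (hyx j hj i hij hir ▸ hyi) (hzeros j hj i (Finset.mem_range.1 hi) hij)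
        · rfl
        · rfl
      · exact fun h => absurd (Finset.mem_range.2 (hr j hj).1) h
    · have : (if j ∈ E then if x (p j) = 0 then 1 else 0 else 0) = 0 := by
        rw [hZ, Finset.mem_filter, not_and] at hj
        split_ifs with hjE hx
        · exact absurd hx (hj hjE)
        · rfl
        · rfl
      have e := h₃ j
      rw [this, add_zero] at e
      refine (Finset.sum_congr rfl fun i _ => ?_).trans e
      by_cases hij : c i = j
      · rw [hyx' j hj i hij]
      · simp [hij]
  · rw [hysum]
    have a₁ := h₁ (p j)
    have a₂ := hδ j
    rw [abs_le]
    by_cases hj : j ∈ Z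
    · rw [if_pos hj, if_pos (Finset.mem_filter.1 hj).1, (Finset.mem_filter.1 hj).2]
      omega
    · rw [if_neg hj]
      split_ifs <;> omega
  · have e : ∑ i ∈ Finset.range n, y i =
        ∑ j, ∑ i ∈ Finset.range n, if c i = j then y i else 0 := by
      rw [Finset.sum_comm]
      simp
    rw [e]
    simp only [hysum]
    rw [Finset.sum_add_distrib]
    simpa using hδsum

/-- Theorem 1 (main): fair splitting of a path into two independent sets after
removing one vertex per class. Vertices of the path are `1,...,n`. -/
theorem fair_path_split (n m : ℕ) (V : Fin m → Finset ℕ)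
    (hcover : Finset.univ.biUnion V = Finset.Icc 1 n)
    (hdisj : ∀ j k : Fin m, j ≠ k → Disjoint (V j) (V k))
    (hne : ∀ j, (V j).Nonempty) :
    ∃ S₁ S₂ : Finset ℕ,
      S₁ ⊆ Finset.Icc 1 n ∧ S₂ ⊆ Finset.Icc 1 n ∧
      Disjoint S₁ S₂ ∧
      (∀ i ∈ S₁, i + 1 ∉ S₁) ∧ (∀ i ∈ S₂, i + 1 ∉ S₂) ∧
      S₁.card + S₂.card = n - m ∧
      S₁.card ≤ S₂.card + 1 ∧ S₂.card ≤ S₁.card + 1 ∧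
      (∀ j, (S₁ ∩ V j).card + (S₂ ∩ V j).card = (V j).card - 1) ∧
      (∀ j, ((V j).card : ℚ) / 2 - 1 ≤ ((S₁ ∩ V j).card : ℚ) ∧
            ((V j).card : ℚ) / 2 - 1 ≤ ((S₂ ∩ V j).card : ℚ)) := by
  rcases Nat.eq_zero_or_pos n with rfl | hn
  · have hm : m = 0 := by
      by_contra hm
      obtain ⟨i, hi⟩ := hne ⟨0, by omega⟩
      simpa [hcover] using Finset.mem_biUnion.2 ⟨_, Finset.mem_univ _, hi⟩
    subst hm
    exact ⟨∅, ∅, by simp⟩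
  have hmem : ∀ {j i}, i ∈ V j → 1 ≤ i ∧ i ≤ n := fun {j i} hi => by
    rw [← Finset.mem_Icc, ← hcover]
    exact Finset.mem_biUnion.2 ⟨j, Finset.mem_univ j, hi⟩
  have hcol : ∀ i, ∃ j, i < n → i + 1 ∈ V j := by
    intro i
    by_cases hi : i < n
    · have : i + 1 ∈ Finset.univ.biUnion V := by rw [hcover, Finset.mem_Icc]; omega
      obtain ⟨j, -, hj⟩ := Finset.mem_biUnion.1 this
      exact ⟨j, fun _ => hj⟩
    · have : 1 ∈ Finset.univ.biUnion V := by rw [hcover, Finset.mem_Icc]; omega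
      obtain ⟨j, -, -⟩ := Finset.mem_biUnion.1 this
      exact ⟨j, fun h => absurd h hi⟩
  choose c hc using hcol
  have hcV : ∀ i < n, ∀ j, c i = j ↔ i + 1 ∈ V j := by
    refine fun i hi j => ⟨fun h => h ▸ hc i hi, fun h => ?_⟩
    by_contra hne
    exact Finset.disjoint_left.1 (hdisj _ _ hne) (hc i hi) h
  obtain ⟨x, h₁, h₂, h₃, h₄, h₅⟩ := exists_almost_balanced_signs n c fun j => by
    obtain ⟨i, hi⟩ := hne j
    obtain ⟨k, rfl⟩ := Nat.exists_eq_add_of_le' (hmem hi).1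
    have hk : k < n := (hmem hi).2
    exact ⟨k, hk, (hcV k hk j).2 hi⟩
  have hVsum : ∀ {M : Type} [AddCommMonoid M] (f : ℕ → M) (j : Fin m),
      ∑ i ∈ V j, f (i - 1) = ∑ i ∈ Finset.range n, if c i = j then f i else 0 := by
    intro M _ f j
    rw [← Finset.sum_filter]
    refine (Finset.sum_bij (fun i _ => i + 1) ?_ ?_ ?_ ?_).symm
    · intro i hi
      rw [Finset.mem_filter, Finset.mem_range] at hi
      exact (hcV i hi.1 j).1 hi.2
    · intro i _ k _ h
      omega
    · intro i hi
      obtain ⟨k, rfl⟩ := Nat.exists_eq_add_of_le' (hmem hi).1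
      have hk : k < n := (hmem hi).2
      exact ⟨k, Finset.mem_filter.2 ⟨Finset.mem_range.2 hk, (hcV k hk j).2 hi⟩, rfl⟩
    · simp
  set S : ℤ → Finset ℕ := fun a => (Finset.Icc 1 n).filter fun i => x (i - 1) = a with hS
  have hSV : ∀ a j, (S a ∩ V j).card = ∑ i ∈ V j, if x (i - 1) = a then 1 else 0 := by
    intro a j
    rw [← Finset.card_filter]
    congr 1
    ext i
    simp only [hS, Finset.mem_inter, Finset.mem_filter, Finset.mem_Icc]
    exact ⟨fun h => ⟨h.2, h.1.2⟩, fun h => ⟨⟨hmem h.1, h.2⟩, h.1⟩⟩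
  have hScard : ∀ a, (S a).card = ∑ j, (S a ∩ V j).card := by
    intro a
    rw [← Finset.card_biUnion, ← Finset.inter_biUnion, hcover,
      Finset.inter_eq_left.2 (Finset.filter_subset _ _)]
    exact fun j _ k _ hjk => (hdisj j k hjk).mono Finset.inter_subset_right
      Finset.inter_subset_right
  have hindep : ∀ a, a ≠ 0 → ∀ i ∈ S a, i + 1 ∉ S a := by
    intro a ha i hi hi'
    simp only [hS, Finset.mem_filter, Finset.mem_Icc] at hi hi'
    obtain ⟨k, rfl⟩ := Nat.exists_eq_add_of_le' hi.1.1
    have := h₂ k (by omega) (hi.2.trans hi'.2.symm)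
    exact ha (hi.2.symm.trans this)
  have htotal : ∀ j, (S 1 ∩ V j).card + (S (-1) ∩ V j).card + 1 = (V j).card := by
    intro j
    have e := h₃ j
    simp only [ite_and] at e
    rw [← hVsum (fun i => if x i = 0 then 1 else 0)] at e
    refine (congrArg _ e.symm).trans ?_
    rw [hSV, hSV, ← Finset.sum_add_distrib, ← Finset.sum_add_distrib, Finset.card_eq_sum_ones]
    refine Finset.sum_congr rfl fun i _ => ?_
    rcases h₁ (i - 1) with h | h | h <;> simp [h]
  have hdiff : ∀ j, ((S 1 ∩ V j).card : ℤ) - (S (-1) ∩ V j).card =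
      ∑ i ∈ Finset.range n, if c i = j then x i else 0 := by
    intro j
    rw [hSV, hSV, ← hVsum x, Nat.cast_sum, Nat.cast_sum, ← Finset.sum_sub_distrib]
    refine Finset.sum_congr rfl fun i _ => ?_
    rcases h₁ (i - 1) with h | h | h <;> simp [h]
  have hdiffS : ((S 1).card : ℤ) - (S (-1)).card = ∑ i ∈ Finset.range n, x i := by
    rw [hScard, hScard, Nat.cast_sum, Nat.cast_sum, ← Finset.sum_sub_distrib]
    simp only [hdiff]
    rw [Finset.sum_comm]
    simp
  have htotalS : (S 1).card + (S (-1)).card + m = n := by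
    have hV : ∑ j, (V j).card = n := by
      rw [← Finset.card_biUnion fun j _ k _ hjk => hdisj j k hjk, hcover, Nat.card_Icc]
      rfl
    conv_rhs => rw [← hV]
    simp only [← htotal, Finset.sum_add_distrib, hScard]
    simp
  rw [← hdiffS, abs_le] at h₅
  refine ⟨S 1, S (-1), Finset.filter_subset _ _, Finset.filter_subset _ _, ?_,
    hindep 1 (by norm_num), hindep (-1) (by norm_num), by omega, by omega, by omega,
    fun j => by have := htotal j; omega, fun j => ?_⟩
  · rw [Finset.disjoint_left]
    intro i hi hi'
    have := (Finset.mem_filter.1 hi).2.symm.trans (Finset.mem_filter.1 hi').2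
    omega
  · have e := h₄ j
    rw [← hdiff, abs_le] at e
    have t := htotal j
    have t₁ : (V j).card ≤ 2 * (S 1 ∩ V j).card + 2 := by omega
    have t₂ : (V j).card ≤ 2 * (S (-1) ∩ V j).card + 2 := by omega
    rw [← Nat.cast_le (α := ℚ)] at t₁ t₂
    push_cast at t₁ t₂
    constructor <;> linarith
end

section
/- Let P be a path whose vertex set is partitioned into m subsets V_1,...,V_m. Then there exists an independent set S of P such that |S ∩ V_j| ≥ |V_j|/2 - 1 for all j ∈ [m], and the inequality |S ∩ V_j| > |V_j|/2 - 1 holds for at least m/2 indices j. -/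
open Finset

section Splitting

/-- The sign of the bead `i` when the sign changes at every bead of `W`. -/
def cutSign (W : Finset ℕ) (i : ℕ) : ℤ := (-1) ^ #{w ∈ W | w < i}

/-- The signed weight of the colour class `j` outside of `W`. -/
def signedSum (n : ℕ) (c : ℕ → ℕ) (a : ℕ → ℤ) (W : Finset ℕ) (j : ℕ) : ℤ :=
  ∑ i ∈ range n, if c i = j ∧ i ∉ W then cutSign W i * a i else 0

/-- The signed weight of the colour class `j` outside of `Q`, with an additional sign change
between the beads `g - 1` and `g`. -/
def gapSum (n : ℕ) (c : ℕ → ℕ) (a : ℕ → ℤ) (Q : Finset ℕ) (g j : ℕ) : ℤ :=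
  ∑ i ∈ range n, if c i = j ∧ i ∉ Q then (if i < g then 1 else -1) * (cutSign Q i * a i) else 0

/-- `W` consists of exactly one bead of each colour below `k`. -/
def IsTransversal (c : ℕ → ℕ) (k : ℕ) (W : Finset ℕ) : Prop :=
  (∀ i ∈ W, c i < k) ∧ ∀ j < k, ∃! i, i ∈ W ∧ c i = j

/-- Cutting at the transversal `W` balances each colour below `k`. -/
def IsSplitting (n : ℕ) (c : ℕ → ℕ) (a : ℕ → ℤ) (k : ℕ) (W : Finset ℕ) : Prop :=
  IsTransversal c k W ∧ ∀ j < k, signedSum n c a W j = 0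

/-- Cutting at the transversal `Q` and at the gap `g` balances each colour below `k`, and
makes the colour `k` positive. -/
def IsGapSplitting (n : ℕ) (c : ℕ → ℕ) (a : ℕ → ℤ) (k : ℕ) (Q : Finset ℕ) (g : ℕ) : Prop :=
  IsTransversal c k Q ∧ (∀ j < k, gapSum n c a Q g j = 0) ∧ 0 < gapSum n c a Q g k

variable {n : ℕ} {c : ℕ → ℕ} {a : ℕ → ℤ}

lemma cutSign_eq_one_or (W : Finset ℕ) (i : ℕ) : cutSign W i = 1 ∨ cutSign W i = -1 :=
  neg_one_pow_eq_or ℤ _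

lemma cutSign_erase {W : Finset ℕ} {b : ℕ} (hb : b ∈ W) (i : ℕ) :
    cutSign (W.erase b) i = if i ≤ b then cutSign W i else -cutSign W i := by
  unfold cutSign
  rw [filter_erase]
  split_ifs with h
  · rw [erase_eq_of_notMem (by simp [h])]
  · have hm : b ∈ ({w ∈ W | w < i} : Finset ℕ) := by simp [hb]; omega
    rw [← card_erase_add_one hm, pow_succ]
    ring

lemma cutSign_succ {W : Finset ℕ} {i : ℕ} (hi : i ∉ W) : cutSign W (i + 1) = cutSign W i := by
  unfold cutSign
  congr 2
  ext w
  simp only [mem_filter, and_congr_right_iff]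
  intro hw
  have : w ≠ i := fun h => hi (h ▸ hw)
  omega

lemma gapSum_erase_self {W : Finset ℕ} {b : ℕ} (hb : b ∈ W) (hbn : b < n) (j : ℕ) :
    gapSum n c a (W.erase b) b j =
      signedSum n c a W j - if c b = j then cutSign W b * a b else 0 := by
  have h : (if c b = j then cutSign W b * a b else 0) =
      ∑ i ∈ range n, if i = b then (if c b = j then cutSign W b * a b else 0) else 0 := by
    simp [hbn]
  rw [h, gapSum, signedSum, ← sum_sub_distrib]
  refine sum_congr rfl fun i _ => ?_
  rw [cutSign_erase hb]
  rcases lt_trichotomy i b with h | rfl | h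
  · simp [h, h.le, h.ne]
  · simp [hb, apply_ite Neg.neg]
  · simp [h.not_gt, h.not_ge, h.ne']

lemma gapSum_erase_succ {W : Finset ℕ} {b : ℕ} (hb : b ∈ W) (hbn : b < n) (j : ℕ) :
    gapSum n c a (W.erase b) (b + 1) j =
      signedSum n c a W j + if c b = j then cutSign W b * a b else 0 := by
  have h : (if c b = j then cutSign W b * a b else 0) =
      ∑ i ∈ range n, if i = b then (if c b = j then cutSign W b * a b else 0) else 0 := by
    simp [hbn]
  rw [h, gapSum, signedSum, ← sum_add_distrib]
  refine sum_congr rfl fun i _ => ?_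
  rw [cutSign_erase hb]
  rcases lt_trichotomy i b with h | rfl | h
  · simp [h.le, h.ne, Nat.lt_succ_of_lt h]
  · simp [hb]
  · simp [h.not_ge, h.ne', show ¬ i < b + 1 by omega]

lemma gapSum_succ_of_mem {Q : Finset ℕ} {b : ℕ} (hb : b ∈ Q) (j : ℕ) :
    gapSum n c a Q (b + 1) j = gapSum n c a Q b j := by
  refine sum_congr rfl fun i _ => ?_
  by_cases hi : i = b
  · simp [hi, hb]
  · simp only [show i < b + 1 ↔ i < b by omega]

lemma gapSum_zero (Q : Finset ℕ) (j : ℕ) : gapSum n c a Q 0 j = -signedSum n c a Q j := by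
  simp only [gapSum, signedSum, ← sum_neg_distrib]
  refine sum_congr rfl fun i _ => ?_
  split_ifs <;> simp_all

lemma gapSum_last (Q : Finset ℕ) (j : ℕ) : gapSum n c a Q n j = signedSum n c a Q j := by
  refine sum_congr rfl fun i hi => ?_
  simp [mem_range.1 hi]

lemma even_signedSum_iff (ha : ∀ i, a i = 1 ∨ a i = -1) (W : Finset ℕ) (j : ℕ) :
    Even (signedSum n c a W j) ↔ Even #{i ∈ range n | c i = j ∧ i ∉ W} := by
  rw [← Int.even_coe_nat, card_filter, signedSum, ← Int.even_sub]
  push_cast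
  rw [← sum_sub_distrib]
  refine even_sum _ fun i _ => ?_
  rcases cutSign_eq_one_or W i with h | h <;> rcases ha i with h' | h' <;>
    split_ifs <;> simp [h, h']

open Classical in
/-- Moving the extra cut across the beads of `W` one at a time changes the sign of the colour
`k` an odd number of times exactly if `W` is a splitting for `k + 1` colours. -/
lemma sum_isGapSplitting_erase (ha : ∀ i, a i = 1 ∨ a i = -1) {k : ℕ}
    (hk : Odd #{i ∈ range n | c i = k}) {W : Finset ℕ} (hW : W ⊆ range n) :
    (∑ b ∈ W, ((if IsGapSplitting n c a k (W.erase b) b then 1 else 0) +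
        (if IsGapSplitting n c a k (W.erase b) (b + 1) then 1 else 0)) : ZMod 2) =
      if IsSplitting n c a (k + 1) W then 1 else 0 := by
  have hδ (b : ℕ) : cutSign W b * a b = 1 ∨ cutSign W b * a b = -1 := by
    rcases cutSign_eq_one_or W b with h | h <;> rcases ha b with h' | h' <;> simp [h, h']
  have two : (1 + 1 : ZMod 2) = 0 := rfl
  have hbn {b : ℕ} (hb : b ∈ W) : b < n := mem_range.1 (hW hb)
  by_cases hfree : ∃ b ∈ W, k ≤ c b
  · obtain ⟨b, hb, hcb⟩ := hfree
    have hzero : ∀ x ∈ W, x ≠ b → ¬ IsTransversal c k (W.erase x) := fun x hx hxb h =>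
      (h.1 b (mem_erase.2 ⟨hxb.symm, hb⟩)).not_ge hcb
    rw [sum_eq_single_of_mem b hb fun x hx hxb => by simp [IsGapSplitting, hzero x hx hxb]]
    simp only [IsGapSplitting, gapSum_erase_self hb (hbn hb), gapSum_erase_succ hb (hbn hb)]
    by_cases htr : IsTransversal c k (W.erase b)
    swap
    · have : ¬ IsSplitting n c a (k + 1) W := by
        rintro ⟨⟨h1, h2⟩, -⟩
        have hcbk : c b = k := by have := h1 b hb; omega
        refine htr ⟨fun i hi => ?_, fun j hj => ?_⟩
        · rw [mem_erase] at hi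
          have hik : c i ≠ k := fun h => hi.1 ((h2 k (by omega)).unique ⟨hi.2, h⟩ ⟨hb, hcbk⟩)
          have := h1 i hi.2
          omega
        · obtain ⟨i, ⟨hi, hij⟩, hu⟩ := h2 j (by omega)
          refine ⟨i, ⟨mem_erase.2 ⟨?_, hi⟩, hij⟩, fun y hy => hu y ⟨mem_of_mem_erase hy.1, hy.2⟩⟩
          rintro rfl
          omega
      simp [htr, this]
    by_cases hT : ∀ j < k, signedSum n c a W j = 0
    swap
    · have : ¬ IsSplitting n c a (k + 1) W := fun h => hT fun j hj => h.2 j (by omega)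
      have h' (d : ℤ) (e : ℕ → ℤ) (he : ∀ j < k, e j = signedSum n c a W j) :
          ¬ (IsTransversal c k (W.erase b) ∧ (∀ j < k, e j = 0) ∧ 0 < d) :=
        fun h => hT fun j hj => he j hj ▸ h.2.1 j hj
      rw [if_neg this, if_neg (h' _ _ fun j hj => ?_), if_neg (h' _ _ fun j hj => ?_), add_zero]
      all_goals rw [if_neg (by omega)]; simp
    have hne (j) (hj : j < k) : ¬ c b = j := by omega
    have hl : ∀ j < k, (signedSum n c a W j - if c b = j then cutSign W b * a b else 0) = 0 :=
      fun j hj => by simp [hne j hj, hT j hj]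
    have hr : ∀ j < k, (signedSum n c a W j + if c b = j then cutSign W b * a b else 0) = 0 :=
      fun j hj => by simp [hne j hj, hT j hj]
    simp only [htr, eq_true hl, eq_true hr, true_and]
    by_cases hcbk : c b = k
    swap
    · have : ¬ IsSplitting n c a (k + 1) W := fun h => hcbk (by have := h.1.1 b hb; omega)
      simp only [hcbk, if_false, this, sub_zero, add_zero]
      split_ifs <;> simp [two]
    have hWtr : IsTransversal c (k + 1) W := by
      refine ⟨fun i hi => ?_, fun j hj => ?_⟩
      · by_cases h : i = b
        · subst h; omega
        · have := htr.1 i (mem_erase.2 ⟨h, hi⟩); omega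
      · rcases Nat.lt_succ_iff_lt_or_eq.1 hj with hj | rfl
        · obtain ⟨i, ⟨hi, hij⟩, hu⟩ := htr.2 j hj
          refine ⟨i, ⟨mem_of_mem_erase hi, hij⟩, fun y hy => hu y ⟨mem_erase.2 ⟨?_, hy.1⟩, hy.2⟩⟩
          rintro rfl
          exact hne j hj hy.2
        · refine ⟨b, ⟨hb, hcbk⟩, fun y hy => ?_⟩
          by_contra h
          exact (htr.1 y (mem_erase.2 ⟨h, hy.1⟩)).ne hy.2
    have hsol : IsSplitting n c a (k + 1) W ↔ signedSum n c a W k = 0 := by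
      refine ⟨fun h => h.2 k (by omega), fun h => ⟨hWtr, fun j hj => ?_⟩⟩
      rcases Nat.lt_succ_iff_lt_or_eq.1 hj with hj | rfl
      exacts [hT j hj, h]
    have heven : Even (signedSum n c a W k) := by
      rw [even_signedSum_iff ha]
      have : ({i ∈ range n | c i = k ∧ i ∉ W} : Finset ℕ) =
          ({i ∈ range n | c i = k} : Finset ℕ).erase b := by
        ext i
        simp only [mem_filter, mem_erase]
        constructor
        · rintro ⟨h1, h2, h3⟩
          exact ⟨fun h => h3 (h ▸ hb), h1, h2⟩
        · rintro ⟨h1, h2, h3⟩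
          exact ⟨h2, h3, fun h => (htr.1 i (mem_erase.2 ⟨h1, h⟩)).ne h3⟩
      rw [this, card_erase_of_mem (by simp [hbn hb, hcbk])]
      exact Nat.Odd.sub_odd hk odd_one
    obtain ⟨t, ht⟩ := heven
    simp only [hcbk, if_true, hsol, ht]
    rcases hδ b with h | h <;> rw [h] <;> split_ifs <;> first | omega | simp
  · push Not at hfree
    have hnot : ¬ IsSplitting n c a (k + 1) W := fun h => by
      obtain ⟨i, ⟨hi, hik⟩, -⟩ := h.1.2 k (by omega)
      exact (hfree i hi).ne hik
    rw [if_neg hnot]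
    by_cases htr : ∃ b ∈ W, IsTransversal c k (W.erase b)
    swap
    · push Not at htr
      exact sum_eq_zero fun b hb => by simp [IsGapSplitting, htr b hb]
    obtain ⟨b, hb, htr⟩ := htr
    obtain ⟨x, ⟨hx, hxb⟩, hu⟩ := htr.2 (c b) (hfree b hb)
    rw [mem_erase] at hx
    have htrx : IsTransversal c k (W.erase x) := by
      refine ⟨fun i hi => hfree i (mem_of_mem_erase hi), fun j hj => ?_⟩
      by_cases hjb : j = c b
      · subst hjb
        refine ⟨b, ⟨mem_erase.2 ⟨hx.1.symm, hb⟩, rfl⟩, fun y hy => ?_⟩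
        by_contra h
        exact (mem_erase.1 hy.1).1 (hu y ⟨mem_erase.2 ⟨h, mem_of_mem_erase hy.1⟩, hy.2⟩)
      · obtain ⟨i, ⟨hi, hij⟩, hi'⟩ := htr.2 j hj
        refine ⟨i, ⟨mem_erase.2 ⟨?_, mem_of_mem_erase hi⟩, hij⟩,
          fun y hy => hi' y ⟨mem_erase.2 ⟨?_, mem_of_mem_erase hy.1⟩, hy.2⟩⟩
        · rintro rfl; exact hjb (hij ▸ hxb)
        · rintro rfl; exact hjb hy.2.symm
    have hzero : ∀ y ∈ W, y ≠ b ∧ y ≠ x → ¬ IsTransversal c k (W.erase y) := fun y hy hne h =>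
      hx.1 ((h.2 (c b) (hfree b hb)).unique ⟨mem_erase.2 ⟨hne.2.symm, hx.2⟩, hxb⟩
        ⟨mem_erase.2 ⟨hne.1.symm, hb⟩, rfl⟩)
    rw [sum_eq_add_of_mem b x hb hx.2 hx.1.symm
      fun y hy hne => by simp [IsGapSplitting, hzero y hy hne]]
    have key (y : ℕ) (hy : y ∈ W) (hyb : c y = c b) (hytr : IsTransversal c k (W.erase y)) :
        ((if IsGapSplitting n c a k (W.erase y) y then 1 else 0) +
          (if IsGapSplitting n c a k (W.erase y) (y + 1) then 1 else 0) : ZMod 2) =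
        if (∀ j < k, j ≠ c b → signedSum n c a W j = 0) ∧ 0 < signedSum n c a W k ∧
          (signedSum n c a W (c b) = 1 ∨ signedSum n c a W (c b) = -1) then 1 else 0 := by
      have hkb := hfree b hb
      have aux (δ : ℤ) : (∀ j < k, signedSum n c a W j + (if c b = j then δ else 0) = 0) ↔
          (∀ j < k, j ≠ c b → signedSum n c a W j = 0) ∧ signedSum n c a W (c b) = -δ := by
        constructor
        · intro h
          refine ⟨fun j hj hjb => ?_, ?_⟩
          · simpa [hjb.symm] using h j hj
          · have := h (c b) hkb
            rw [if_pos rfl] at this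
            omega
        · rintro ⟨h1, h2⟩ j hj
          split_ifs with h
          · rw [← h]; omega
          · simpa using h1 j hj (Ne.symm h)
      have aux' (δ : ℤ) : (∀ j < k, signedSum n c a W j - (if c b = j then δ else 0) = 0) ↔
          (∀ j < k, j ≠ c b → signedSum n c a W j = 0) ∧ signedSum n c a W (c b) = δ := by
        have := aux (-δ)
        rw [neg_neg] at this
        rw [← this]
        refine forall₂_congr fun j _ => ?_
        split_ifs <;> simp [sub_eq_add_neg]
      simp only [IsGapSplitting, gapSum_erase_self hy (hbn hy), gapSum_erase_succ hy (hbn hy),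
        hytr, true_and, hyb, aux, aux', if_neg hkb.ne, sub_zero, add_zero]
      by_cases h1 : ∀ j < k, j ≠ c b → signedSum n c a W j = 0
      swap
      · simp only [h1, false_and, if_false, add_zero]
      by_cases h2 : 0 < signedSum n c a W k
      swap
      · simp only [h2, false_and, and_false, if_false, add_zero]
      simp only [eq_true h1, h2, true_and, and_true]
      rcases hδ y with h | h <;> rw [h] <;> split_ifs <;> first | omega | simp
    rw [key b hb rfl htr, key x hx.2 hxb htrx]
    split_ifs <;> simp [two]

open Classical in
/-- The parity of the number of splittings does not depend on the number of colours. -/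
lemma sum_isSplitting_succ (ha : ∀ i, a i = 1 ∨ a i = -1) {k : ℕ}
    (hk : Odd #{i ∈ range n | c i = k}) :
    (∑ W ∈ (range n).powerset, if IsSplitting n c a (k + 1) W then 1 else 0 : ZMod 2) =
      ∑ W ∈ (range n).powerset, if IsSplitting n c a k W then 1 else 0 := by
  let p (Q : Finset ℕ) (g : ℕ) : ZMod 2 := if IsGapSplitting n c a k Q g then 1 else 0
  calc
    _ = ∑ W ∈ (range n).powerset, ∑ b ∈ W, (p (W.erase b) b + p (W.erase b) (b + 1)) :=
      sum_congr rfl fun W hW => (sum_isGapSplitting_erase ha hk (mem_powerset.1 hW)).symm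
    _ = ∑ Q ∈ (range n).powerset, ∑ b ∈ range n \ Q, (p Q b + p Q (b + 1)) := by
      rw [sum_sigma', sum_sigma']
      refine sum_bij' (fun x _ => ⟨x.1.erase x.2, x.2⟩) (fun x _ => ⟨insert x.2 x.1, x.2⟩)
        ?_ ?_ ?_ ?_ ?_
      · rintro ⟨W, b⟩ h
        simp only [mem_sigma, mem_powerset] at h
        simp only [mem_sigma, mem_powerset, mem_sdiff]
        exact ⟨(erase_subset _ _).trans h.1, h.1 h.2, notMem_erase _ _⟩
      · rintro ⟨Q, b⟩ h
        simp only [mem_sigma, mem_powerset, mem_sdiff] at h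
        simp only [mem_sigma, mem_powerset]
        exact ⟨insert_subset h.2.1 h.1, mem_insert_self _ _⟩
      · rintro ⟨W, b⟩ h
        simp only [mem_sigma] at h
        simp [insert_erase h.2]
      · rintro ⟨Q, b⟩ h
        simp only [mem_sigma, mem_sdiff] at h
        simp [erase_insert h.2.2]
      · intros; rfl
    _ = ∑ Q ∈ (range n).powerset, ∑ b ∈ range n, (p Q (b + 1) - p Q b) := by
      refine sum_congr rfl fun Q hQ => ?_
      rw [← sum_sdiff (mem_powerset.1 hQ), sum_eq_zero (s := Q), add_zero]
      · exact sum_congr rfl fun b _ => by rw [CharTwo.sub_eq_add, add_comm]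
      · intro b hb
        have : IsGapSplitting n c a k Q (b + 1) = IsGapSplitting n c a k Q b := by
          simp only [IsGapSplitting, gapSum_succ_of_mem hb]
        dsimp only [p]
        rw [this, sub_self]
    _ = _ := by
      refine sum_congr rfl fun Q hQ => ?_
      rw [sum_range_sub, CharTwo.sub_eq_add]
      simp only [p, IsGapSplitting, gapSum_last, gapSum_zero, neg_eq_zero, IsSplitting]
      by_cases h : IsTransversal c k Q ∧ ∀ j < k, signedSum n c a Q j = 0
      swap
      · simp only [← and_assoc, h, false_and, if_false, add_zero]
      have hne : signedSum n c a Q k ≠ 0 := by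
        intro h0
        have heven : Even (signedSum n c a Q k) := h0 ▸ Even.zero
        rw [even_signedSum_iff ha, filter_congr (q := fun i => c i = k)] at heven
        · exact (Nat.not_even_iff_odd.2 hk) heven
        · exact fun i _ => ⟨fun hi => hi.1, fun hi => ⟨hi, fun hQ => (h.1.1 i hQ).ne hi⟩⟩
      simp only [← and_assoc, h, true_and]
      rcases lt_or_gt_of_ne hne with h0 | h0
      · simp [h0.not_gt, h0, eq_true h.2]
      · simp [h0, h0.not_gt, eq_true h.2]

/-- Splitting theorem: if each of the colours `0, …, k - 1` has an odd number of beads, then one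
can choose one bead of each of these colours such that cutting there balances the remaining
ones. -/
theorem exists_isSplitting (ha : ∀ i, a i = 1 ∨ a i = -1) {k : ℕ}
    (hk : ∀ j < k, Odd #{i ∈ range n | c i = j}) :
    ∃ W, IsSplitting n c a k W := by
  classical
  have hsum : (∑ W ∈ (range n).powerset, if IsSplitting n c a k W then 1 else 0 : ZMod 2) = 1 := by
    induction k with
    | zero =>
      have h (W : Finset ℕ) : IsSplitting n c a 0 W ↔ W = ∅ := by
        simp [IsSplitting, IsTransversal, eq_empty_iff_forall_notMem]
      simp [h]
    | succ k ih =>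
      rw [sum_isSplitting_succ ha (hk k (by omega)), ih fun j hj => hk j (by omega)]
  by_contra! h
  simp [h] at hsum

lemma IsSplitting.card_eq {k : ℕ} {W : Finset ℕ} (h : IsSplitting n c a k W)
    (ha : ∀ i, a i = 1 ∨ a i = -1) {j q : ℕ} (hj : j < k)
    (hq : #{i ∈ range n | c i = j} = 2 * q + 1) {ε : ℤ} (hε : ε = 1 ∨ ε = -1) :
    q ≤ #{i ∈ range n | c i = j ∧ i ∉ W ∧ cutSign W i * a i = ε} := by
  have hδ (i : ℕ) : cutSign W i * a i = 1 ∨ cutSign W i * a i = -1 := by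
    rcases cutSign_eq_one_or W i with h | h <;> rcases ha i with h' | h' <;> simp [h, h']
  have hsum := h.2 j hj
  obtain ⟨x, -, hx⟩ := h.1.2 j hj
  have hcard : 2 * q ≤ #{i ∈ range n | c i = j ∧ i ∉ W} := by
    have : #{i ∈ range n | c i = j} ≤ #{i ∈ range n | c i = j ∧ i ∉ W} + 1 := by
      rw [← card_singleton x]
      refine (card_le_card fun i hi => ?_).trans (card_union_le _ _)
      rw [mem_filter] at hi
      by_cases hiW : i ∈ W
      · simp [hx i ⟨hiW, hi.2⟩]
      · simp [hi, hiW]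
    omega
  have key : (2 * #{i ∈ range n | c i = j ∧ i ∉ W ∧ cutSign W i * a i = ε} : ℤ) =
      #{i ∈ range n | c i = j ∧ i ∉ W} + ε * signedSum n c a W j := by
    rw [signedSum, card_filter, card_filter]
    push_cast
    rw [mul_sum, mul_sum, ← sum_add_distrib]
    refine sum_congr rfl fun i _ => ?_
    by_cases h1 : c i = j ∧ i ∉ W
    · rcases hδ i with h2 | h2 <;> rcases hε with rfl | rfl <;> simp [h1, h2]
    · have h2 : ¬ (c i = j ∧ i ∉ W ∧ cutSign W i * a i = ε) := fun h => h1 ⟨h.1, h.2.1⟩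
      simp only [h1, h2, if_false, mul_zero, add_zero]
  rw [hsum] at key
  omega

end Splitting


/-- Conjecture of Aharoni et al.: an independent set of the path on `1,...,n`
meeting each class `V j` in at least `|V j|/2 - 1` vertices, with strict
inequality for at least `m/2` classes. -/
theorem aharoni_conjecture (n m : ℕ) (V : Fin m → Finset ℕ)
    (hcover : Finset.univ.biUnion V = Finset.Icc 1 n)
    (hdisj : ∀ j k : Fin m, j ≠ k → Disjoint (V j) (V k))
    (hne : ∀ j, (V j).Nonempty) :
    ∃ S : Finset ℕ, S ⊆ Finset.Icc 1 n ∧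
      (∀ i ∈ S, i + 1 ∉ S) ∧
      (∀ j, ((V j).card : ℚ) / 2 - 1 ≤ ((S ∩ V j).card : ℚ)) ∧
      (m : ℚ) / 2 ≤
        ((Finset.univ.filter
          (fun j : Fin m => ((V j).card : ℚ) / 2 - 1 < ((S ∩ V j).card : ℚ))).card : ℚ) := by
  classical
  have hV (j : Fin m) {i : ℕ} (hi : i ∈ V j) : 1 ≤ i ∧ i ≤ n := by
    rw [← mem_Icc, ← hcover]
    exact mem_biUnion.2 ⟨j, mem_univ _, hi⟩
  -- Each class of even size receives one additional bead, placed after the end of the path.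
  let c (i : ℕ) : ℕ :=
    if h : ∃ j, i ∈ V j then (h.choose : ℕ)
    else if h : ∃ j : Fin m, i = n + 1 + j ∧ Even #(V j) then (h.choose : ℕ) else m
  have hc (j : Fin m) (i : ℕ) : c i = j ↔ i ∈ V j ∨ (i = n + 1 + j ∧ Even #(V j)) := by
    by_cases h : ∃ j, i ∈ V j
    · have hs := h.choose_spec
      have hi := hV _ hs
      simp only [c, dif_pos h, Fin.val_inj]
      constructor
      · rintro rfl
        exact Or.inl hs
      · rintro (h1 | h1)
        · by_contra hne
          exact disjoint_left.1 (hdisj _ _ hne) hs h1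
        · omega
    · have h1 : i ∉ V j := fun hi => h ⟨j, hi⟩
      simp only [c, dif_neg h, h1, false_or]
      by_cases h' : ∃ j : Fin m, i = n + 1 + j ∧ Even #(V j)
      · have hs := h'.choose_spec
        simp only [dif_pos h', Fin.val_inj]
        constructor
        · intro h2
          rwa [h2] at hs
        · rintro ⟨h2, -⟩
          exact Fin.ext (by omega)
      · simp only [dif_neg h']
        exact ⟨fun h2 => absurd h2 j.2.ne', fun h2 => absurd ⟨j, h2⟩ h'⟩
  have hclass (j : Fin m) : ({i ∈ range (n + 1 + m) | c i = j} : Finset ℕ) =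
      if Even #(V j) then insert (n + 1 + j) (V j) else V j := by
    ext i
    have := j.2
    have := hV j (i := i)
    split_ifs with h
    · simp only [mem_filter, mem_range, hc, h, and_true, mem_insert]
      grind
    · simp only [mem_filter, mem_range, hc, h, and_false, or_false]
      grind
  have hcard (j : Fin m) : #{i ∈ range (n + 1 + m) | c i = j} = 2 * (#(V j) / 2) + 1 := by
    rw [hclass]
    split_ifs with h
    · rw [card_insert_of_notMem fun hj => by have := hV j hj; omega]
      have := Nat.two_mul_div_two_of_even h
      omega
    · exact (Nat.two_mul_div_two_add_one_of_odd (Nat.not_even_iff_odd.1 h)).symm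
  let a (i : ℕ) : ℤ := (-1) ^ i
  have ha (i : ℕ) : a i = 1 ∨ a i = -1 := neg_one_pow_eq_or ℤ i
  obtain ⟨W, hW⟩ := exists_isSplitting (n := n + 1 + m) (c := c) (k := m) ha
    fun j hj => ⟨_, hcard ⟨j, hj⟩⟩
  let S (ε : ℤ) : Finset ℕ := {i ∈ Icc 1 n | i ∉ W ∧ cutSign W i * a i = ε}
  have hS (ε : ℤ) (hε : ε = 1 ∨ ε = -1) : S ε ⊆ Icc 1 n ∧ ∀ i ∈ S ε, i + 1 ∉ S ε := by
    refine ⟨filter_subset _ _, fun i hi hi' => ?_⟩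
    simp only [S, mem_filter] at hi hi'
    rw [cutSign_succ hi.2.1] at hi'
    have : a (i + 1) = -a i := by simp [a, pow_succ]
    rw [this, mul_neg] at hi'
    omega
  have hlow (j : Fin m) (ε : ℤ) (hε : ε = 1 ∨ ε = -1) : #(V j) / 2 ≤ #(S ε ∩ V j) +
      if Even #(V j) ∧ cutSign W (n + 1 + j) * a (n + 1 + j) = ε then 1 else 0 := by
    refine (hW.card_eq ha j.2 (hcard j) hε).trans ?_
    have hsub : ({i ∈ range (n + 1 + m) | c i = j ∧ i ∉ W ∧ cutSign W i * a i = ε} : Finset ℕ) ⊆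
        (S ε ∩ V j) ∪ if Even #(V j) ∧ cutSign W (n + 1 + j) * a (n + 1 + j) = ε
          then {n + 1 + (j : ℕ)} else ∅ := by
      intro i hi
      simp only [mem_filter, hc] at hi
      obtain ⟨-, hi | ⟨rfl, he⟩, hiW, hiε⟩ := hi
      · exact mem_union_left _ (mem_inter.2
          ⟨mem_filter.2 ⟨mem_Icc.2 (hV j hi), hiW, hiε⟩, hi⟩)
      · simp [he, hiε]
    refine (card_le_card hsub).trans ((card_union_le _ _).trans ?_)
    split_ifs <;> simp
  have hlt (j : Fin m) (ε : ℤ) : ((#(V j) : ℚ) / 2 - 1 < #(S ε ∩ V j)) ↔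
      #(V j) < 2 * #(S ε ∩ V j) + 2 := by
    rw [← Nat.cast_lt (α := ℚ)]
    push_cast
    constructor <;> intro h <;> linarith
  have hweak (ε : ℤ) (hε : ε = 1 ∨ ε = -1) (j : Fin m) :
      (#(V j) : ℚ) / 2 - 1 ≤ #(S ε ∩ V j) := by
    have h : #(V j) ≤ 2 * #(S ε ∩ V j) + 2 := by
      have := hlow j ε hε
      split_ifs at this with h
      · have := Nat.two_mul_div_two_of_even h.1
        omega
      · omega
    have h' : (#(V j) : ℚ) ≤ 2 * #(S ε ∩ V j) + 2 := mod_cast h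
    linarith
  let G (ε : ℤ) : Finset (Fin m) := {j | (#(V j) : ℚ) / 2 - 1 < #(S ε ∩ V j)}
  have hG : m ≤ #(G 1) + #(G (-1)) := by
    have : univ ⊆ G 1 ∪ G (-1) := by
      intro j _
      simp only [G, mem_union, mem_filter, mem_univ, true_and, hlt]
      have h1 := hlow j 1 (Or.inl rfl)
      have h2 := hlow j (-1) (Or.inr rfl)
      split_ifs at h1 h2 <;> omega
    simpa using (card_le_card this).trans (card_union_le _ _)
  obtain ⟨ε, hε, hm⟩ : ∃ ε : ℤ, (ε = 1 ∨ ε = -1) ∧ m ≤ 2 * #(G ε) := by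
    by_cases h : m ≤ 2 * #(G 1)
    · exact ⟨1, Or.inl rfl, h⟩
    · exact ⟨-1, Or.inr rfl, by omega⟩
  refine ⟨S ε, (hS ε hε).1, (hS ε hε).2, hweak ε hε, ?_⟩
  have hm' : (m : ℚ) ≤ 2 * #(G ε) := mod_cast hm
  have : (m : ℚ) / 2 ≤ #(G ε) := by linarith
  convert this
end

section
/- Let C be a cycle on n vertices whose vertex set is partitioned into m subsets V_1,...,V_m. Then there exist two disjoint sets S_1 and S_2 covering all vertices but exactly one in each V_j, with |S_1| and |S_2| differing by at most one, satisfying |S_i ∩ V_j| ≥ |V_j|/2 - 1 for all i ∈ {1,2} and j ∈ [m], where one of the S_i is an independent set of C of size ⌊(n-m)/2⌋ and the other set induces at most ⌈(n-m)/2⌉ - ⌊(n-m)/2⌋ edges of C. -/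
/-- The number modulo 2 of maximal chains of nonempty subsets of `x`, weighted by the product of
the values of `p` along the chain. -/
def flagCount {α : Type*} [DecidableEq α] (p : Finset α → ZMod 2) (x : Finset α) : ZMod 2 :=
  if x = ∅ then 1 else p x * ∑ v ∈ x.attach, flagCount p (x.erase v.1)
termination_by x.card
decreasing_by exact Finset.card_erase_lt_of_mem v.2

section FlagCount

variable {α : Type*} [DecidableEq α]

lemma flagCount_empty (p : Finset α → ZMod 2) : flagCount p ∅ = 1 := by
  rw [flagCount]; simp

lemma flagCount_of_nonempty (p : Finset α → ZMod 2) {x : Finset α} (hx : x.Nonempty) :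
    flagCount p x = p x * ∑ v ∈ x, flagCount p (x.erase v) := by
  rw [flagCount, if_neg hx.ne_empty, Finset.sum_attach x (fun v => flagCount p (x.erase v))]

lemma sum_erase_erase_eq_zero (G : Finset α → ZMod 2) (x : Finset α) :
    ∑ v ∈ x, ∑ u ∈ x.erase v, G ((x.erase v).erase u) = 0 := by
  rw [Finset.sum_sigma']
  refine Finset.sum_involution (fun a _ => ⟨a.2, a.1⟩) ?_ ?_ ?_ ?_
  · rintro ⟨v, u⟩ _
    simp only
    rw [Finset.erase_right_comm]
    exact CharTwo.add_self_eq_zero _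
  · rintro ⟨v, u⟩ h _ h'
    simp only [Finset.mem_sigma, Finset.mem_erase] at h
    simp only [Sigma.mk.injEq] at h'
    exact h.2.1 h'.1
  · rintro ⟨v, u⟩ h
    simp only [Finset.mem_sigma, Finset.mem_erase] at h ⊢
    exact ⟨h.2.2, Ne.symm h.2.1, h.1⟩
  · rintro ⟨v, u⟩ _
    rfl

lemma sum_flagCount_erase_one_add (p : Finset α → ZMod 2) (x : Finset α) :
    ∑ v ∈ x, flagCount (fun y => 1 + p y) (x.erase v) = ∑ v ∈ x, flagCount p (x.erase v) := by
  induction x using Finset.strongInduction with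
  | H x ih =>
    rcases Nat.lt_or_ge 1 x.card with hx | hx
    · rw [← CharTwo.add_eq_zero, ← Finset.sum_add_distrib, ← sum_erase_erase_eq_zero (flagCount p) x]
      refine Finset.sum_congr rfl fun v hv => ?_
      have hne : (x.erase v).Nonempty := by
        rw [← Finset.card_pos, Finset.card_erase_of_mem hv]; omega
      rw [flagCount_of_nonempty _ hne, flagCount_of_nonempty _ hne,
        ih _ (Finset.erase_ssubset hv), ← add_mul, add_assoc, CharTwo.add_self_eq_zero, add_zero,
        one_mul]
    · refine Finset.sum_congr rfl fun v hv => ?_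
      have : x.erase v = ∅ := by
        rw [← Finset.card_eq_zero, Finset.card_erase_of_mem hv]; omega
      rw [this, flagCount_empty, flagCount_empty]

lemma flagCount_add_flagCount_one_add (p : Finset α → ZMod 2) {x : Finset α} (hx : x.Nonempty) :
    flagCount p x + flagCount (fun y => 1 + p y) x = ∑ v ∈ x, flagCount p (x.erase v) := by
  rw [flagCount_of_nonempty _ hx, flagCount_of_nonempty _ hx, sum_flagCount_erase_one_add,
    ← add_mul, add_left_comm, CharTwo.add_self_eq_zero, add_zero, one_mul]

end FlagCount

/-- `x` is the graph of a partial sign assignment on `0, ..., n-1`. -/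
def IsSigned (n : ℕ) (x : Finset (ℕ × Bool)) : Prop :=
  ∀ v ∈ x, v.1 < n ∧ (v.1, !v.2) ∉ x

/-- All signs reversed. -/
def antipode (x : Finset (ℕ × Bool)) : Finset (ℕ × Bool) :=
  x.image fun v => (v.1, !v.2)

lemma mem_antipode {x : Finset (ℕ × Bool)} {i : ℕ} {b : Bool} :
    (i, b) ∈ antipode x ↔ (i, !b) ∈ x := by
  simp only [antipode, Finset.mem_image, Prod.mk.injEq, Prod.exists]
  constructor
  · rintro ⟨a, c, h, rfl, rfl⟩
    simpa using h
  · intro h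
    exact ⟨i, !b, h, rfl, by simp⟩

lemma flip_injective : Function.Injective fun v : ℕ × Bool => (v.1, !v.2) := by
  rintro ⟨a, b⟩ ⟨c, d⟩ h
  simpa using h

lemma antipode_antipode (x : Finset (ℕ × Bool)) : antipode (antipode x) = x := by
  ext ⟨i, b⟩
  simp [mem_antipode]

lemma antipode_mono {x y : Finset (ℕ × Bool)} (h : x ⊆ y) : antipode x ⊆ antipode y :=
  Finset.image_subset_image h

lemma card_antipode (x : Finset (ℕ × Bool)) : (antipode x).card = x.card :=
  Finset.card_image_of_injective _ flip_injective

lemma antipode_insert (x : Finset (ℕ × Bool)) (i : ℕ) (b : Bool) :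
    antipode (insert (i, b) x) = insert (i, !b) (antipode x) := by
  simp [antipode, Finset.image_insert]

lemma antipode_erase (x : Finset (ℕ × Bool)) (v : ℕ × Bool) :
    antipode (x.erase v) = (antipode x).erase (v.1, !v.2) :=
  Finset.image_erase flip_injective x v

lemma IsSigned.subset {n : ℕ} {x y : Finset (ℕ × Bool)} (hy : IsSigned n y) (h : x ⊆ y) :
    IsSigned n x :=
  fun v hv => ⟨(hy v (h hv)).1, fun h' => (hy v (h hv)).2 (h h')⟩

lemma IsSigned.insert {n : ℕ} {x : Finset (ℕ × Bool)} (hx : IsSigned n x) (b : Bool) :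
    IsSigned (n + 1) (insert (n, b) x) := by
  have hn : ∀ c, (n, c) ∉ x := fun c hc => lt_irrefl _ (hx _ hc).1
  intro v hv
  rcases Finset.mem_insert.1 hv with rfl | hv
  · simp [hn]
  · have := hx v hv
    refine ⟨by omega, fun h => ?_⟩
    rcases Finset.mem_insert.1 h with h | h
    · have := congrArg Prod.fst h
      simp only at this
      omega
    · exact this.2 h

/-- The sum of `G` over all total sign assignments on `0, ..., k-1`. -/
def signSum : ℕ → (Finset (ℕ × Bool) → ZMod 2) → ZMod 2
  | 0, G => G ∅
  | k + 1, G => signSum k (fun y => G (insert (k, true) y)) +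
      signSum k (fun y => G (insert (k, false) y))

lemma signSum_congr {k : ℕ} {G G' : Finset (ℕ × Bool) → ZMod 2}
    (h : ∀ y, IsSigned k y → G y = G' y) : signSum k G = signSum k G' := by
  induction k generalizing G G' with
  | zero => exact h _ (by simp [IsSigned])
  | succ k ih =>
    rw [signSum, signSum, ih fun y hy => h _ (hy.insert true), ih fun y hy => h _ (hy.insert false)]

lemma signSum_add (k : ℕ) (G G' : Finset (ℕ × Bool) → ZMod 2) :
    signSum k (fun y => G y + G' y) = signSum k G + signSum k G' := by
  induction k generalizing G G' with
  | zero => rfl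
  | succ k ih => rw [signSum, signSum, signSum, ih, ih, add_add_add_comm]

lemma signSum_zero (k : ℕ) : signSum k (fun _ => 0) = 0 := by
  induction k with
  | zero => rfl
  | succ k ih => rw [signSum, ih, add_zero]

lemma signSum_antipode (k : ℕ) (G : Finset (ℕ × Bool) → ZMod 2) :
    signSum k (fun y => G (antipode y)) = signSum k G := by
  induction k generalizing G with
  | zero => rfl
  | succ k ih =>
    simp only [signSum, antipode_insert]
    rw [ih fun y => G (insert (k, !true) y), ih fun y => G (insert (k, !false) y), add_comm]
    rfl

lemma sum_erase_insert {k : ℕ} {y : Finset (ℕ × Bool)} (hy : IsSigned k y) (b : Bool)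
    (G : Finset (ℕ × Bool) → ZMod 2) :
    ∑ v ∈ insert (k, b) y, G ((insert (k, b) y).erase v) =
      G y + ∑ v ∈ y, G (insert (k, b) (y.erase v)) := by
  have hk : (k, b) ∉ y := fun h => lt_irrefl _ (hy _ h).1
  rw [Finset.sum_insert hk, Finset.erase_insert hk]
  congr 1
  refine Finset.sum_congr rfl fun v hv => ?_
  rw [Finset.erase_insert_of_ne]
  rintro rfl
  exact hk hv

lemma signSum_sum_erase (k : ℕ) (G : Finset (ℕ × Bool) → ZMod 2) :
    signSum k (fun y => ∑ v ∈ y, G (y.erase v)) = 0 := by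
  induction k generalizing G with
  | zero => rfl
  | succ k ih =>
    rw [signSum, signSum_congr fun y hy => sum_erase_insert hy true G,
      signSum_congr fun y hy => sum_erase_insert hy false G, signSum_add, signSum_add,
      ih fun y => G (insert (k, true) y), ih fun y => G (insert (k, false) y), add_zero,
      CharTwo.add_self_eq_zero]

lemma flagCount_antipode {n : ℕ} {p : Finset (ℕ × Bool) → ZMod 2}
    (hp : ∀ x, IsSigned n x → x.Nonempty → p (antipode x) = 1 + p x)
    (x : Finset (ℕ × Bool)) (hx : IsSigned n x) :
    flagCount p (antipode x) = flagCount (fun y => 1 + p y) x := by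
  induction x using Finset.strongInduction with
  | H x ih =>
    rcases x.eq_empty_or_nonempty with rfl | hne
    · rw [flagCount_empty, antipode, Finset.image_empty, flagCount_empty]
    · rw [flagCount_of_nonempty _ hne, flagCount_of_nonempty p (x := antipode x) (hne.image _),
        hp x hx hne]
      congr 1
      change ∑ v ∈ x.image _, _ = _
      rw [Finset.sum_image flip_injective.injOn]
      refine Finset.sum_congr rfl fun v hv => ?_
      rw [← ih _ (Finset.erase_ssubset hv) (hx.subset (Finset.erase_subset _ _)), antipode_erase]

/-- If `p` selects exactly one of each antipodal pair of nonempty signed sets, the number of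
maximal chains of selected signed sets is odd. -/
theorem signSum_flagCount {n : ℕ} {p : Finset (ℕ × Bool) → ZMod 2}
    (hp : ∀ x, IsSigned n x → x.Nonempty → p (antipode x) = 1 + p x) :
    signSum n (flagCount p) = 1 := by
  induction n with
  | zero => exact flagCount_empty p
  | succ k ih =>
    have hk : ∀ y, IsSigned k y → IsSigned (k + 1) y :=
      fun y hy v hv => ⟨Nat.lt_succ_of_lt (hy v hv).1, (hy v hv).2⟩
    rw [signSum, ← signSum_antipode k fun y => flagCount p (insert (k, false) y), ← signSum_add]
    have key : ∀ y, IsSigned k y →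
        flagCount p (insert (k, true) y) + flagCount p (insert (k, false) (antipode y)) =
          flagCount p y + ∑ v ∈ y, flagCount p (insert (k, true) (y.erase v)) := by
      intro y hy
      have h := antipode_insert y k true
      rw [Bool.not_true] at h
      rw [← h, flagCount_antipode hp _ (hy.insert true),
        flagCount_add_flagCount_one_add p (Finset.insert_nonempty _ _), sum_erase_insert hy]
    rw [signSum_congr key, signSum_add, ih fun x hx => hp x (hk x hx),
      signSum_sum_erase k fun y => flagCount p (insert (k, true) y), add_zero]

lemma exists_of_signSum_ne_zero {k : ℕ} {G : Finset (ℕ × Bool) → ZMod 2} (h : signSum k G ≠ 0) :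
    ∃ y, IsSigned k y ∧ y.card = k ∧ G y ≠ 0 := by
  induction k generalizing G with
  | zero => exact ⟨∅, by simp [IsSigned], rfl, h⟩
  | succ k ih =>
    have : ∃ b, signSum k (fun y => G (insert (k, b) y)) ≠ 0 := by
      by_contra! h'
      exact h (by rw [signSum, h', h', add_zero])
    obtain ⟨b, hb⟩ := this
    obtain ⟨y, hy, hc, hG⟩ := ih hb
    refine ⟨_, hy.insert b, ?_, hG⟩
    rw [Finset.card_insert_of_notMem fun h => lt_irrefl _ (hy _ h).1, hc]

/-- A form of the octahedral Tucker lemma. -/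
theorem exists_le_of_monotone_of_antipode_ne {n : ℕ} {A : Finset (ℕ × Bool) → ℕ}
    (hmono : Monotone A) (hne : ∀ x, IsSigned n x → x.Nonempty → A (antipode x) ≠ A x) :
    ∃ x, n ≤ A x := by
  classical
  set p : Finset (ℕ × Bool) → ZMod 2 :=
    fun x => if (A (antipode x) < A x ↔ x.card % 2 = 1) then 1 else 0 with hpdef
  have hp : ∀ x, IsSigned n x → x.Nonempty → p (antipode x) = 1 + p x := by
    intro x hx hx'
    have h := hne x hx hx'
    simp only [hpdef, antipode_antipode, card_antipode]
    have h2 : (1 + 1 : ZMod 2) = 0 := rfl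
    split_ifs with h3 h4 h4
    · exfalso; omega
    · rfl
    · exact h2.symm
    · exfalso; omega
  have key : ∀ x, IsSigned n x → flagCount p x ≠ 0 → x.card ≤ max (A x) (A (antipode x)) ∧
      (x.Nonempty → (A (antipode x) < A x ↔ x.card % 2 = 1)) := by
    intro x
    induction x using Finset.strongInduction with
    | H x ih =>
      intro hx hF
      rcases x.eq_empty_or_nonempty with rfl | hx'
      · simp
      rw [flagCount_of_nonempty _ hx'] at hF
      have hpx : A (antipode x) < A x ↔ x.card % 2 = 1 := by
        by_contra h
        exact hF (by simp only [hpdef, if_neg h, zero_mul])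
      refine ⟨?_, fun _ => hpx⟩
      obtain ⟨v, hv, hv'⟩ := Finset.exists_ne_zero_of_sum_ne_zero (right_ne_zero_of_mul hF)
      have hs := hx.subset (Finset.erase_subset v x)
      obtain ⟨h1, h2⟩ := ih _ (Finset.erase_ssubset hv) hs hv'
      have m1 := hmono (Finset.erase_subset v x)
      have m2 := hmono (antipode_mono (Finset.erase_subset v x))
      have hn := hne x hx hx'
      have hc := Finset.card_erase_add_one hv
      rcases (x.erase v).eq_empty_or_nonempty with h | h
      · rw [h, Finset.card_empty] at hc
        omega
      · have h3 := h2 h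
        have hn' := hne _ hs h
        omega
  have hsum : signSum n (flagCount p) ≠ 0 := by
    rw [signSum_flagCount hp]; exact one_ne_zero
  obtain ⟨y, hy, hc, hF⟩ := exists_of_signSum_ne_zero hsum
  have := (key y hy hF).1
  rcases le_max_iff.1 (hc ▸ this) with h | h
  · exact ⟨_, h⟩
  · exact ⟨_, h⟩

/-- The length of the longest alternating sequence of signs, beginning with `true`, occurring in
`x` on increasing positions below `k`. -/
def altLen (x : Finset (ℕ × Bool)) : ℕ → ℕ
  | 0 => 0
  | k + 1 => if (k, decide (altLen x k % 2 = 0)) ∈ x then altLen x k + 1 else altLen x k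

lemma altLen_mono {x y : Finset (ℕ × Bool)} (h : x ⊆ y) (k : ℕ) : altLen x k ≤ altLen y k := by
  induction k with
  | zero => exact le_rfl
  | succ k ih =>
    rw [altLen, altLen]
    rcases ih.eq_or_lt with he | hl
    · rw [he]
      split_ifs with h1 h2
      · exact le_rfl
      · exact absurd (h h1) h2
      · exact Nat.le_succ _
      · exact le_rfl
    · split_ifs <;> omega

lemma altLen_add_altLen_antipode {n : ℕ} {x : Finset (ℕ × Bool)} (hx : IsSigned n x) (k : ℕ) :
    (altLen x k + altLen (antipode x) k) % 2 = 1 ∨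
      (altLen x k = 0 ∧ altLen (antipode x) k = 0 ∧ ∀ v ∈ x, k ≤ v.1) := by
  induction k with
  | zero => exact Or.inr ⟨rfl, rfl, fun _ _ => Nat.zero_le _⟩
  | succ k ih =>
    simp only [altLen, mem_antipode]
    rcases ih with h | ⟨h1, h2, h3⟩
    · left
      have : (!decide (altLen (antipode x) k % 2 = 0)) = decide (altLen x k % 2 = 0) := by
        rw [← decide_not, decide_eq_decide]; omega
      rw [this]
      split_ifs <;> omega
    · rw [h1, h2]
      by_cases ht : (k, true) ∈ x
      · have := (hx _ ht).2
        left
        simp_all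
      · by_cases hf : (k, false) ∈ x
        · left
          simp_all
        · right
          refine ⟨by simp [ht], by simp [hf], ?_⟩
          rintro ⟨i, b⟩ hv
          have := h3 _ hv
          rcases this.eq_or_lt with he | hl
          · simp only at he
            subst he
            cases b
            · exact absurd hv hf
            · exact absurd hv ht
          · exact hl

lemma altLen_ne_altLen_antipode {n : ℕ} {x : Finset (ℕ × Bool)} (hx : IsSigned n x)
    (hne : x.Nonempty) : altLen (antipode x) n ≠ altLen x n := by
  rcases altLen_add_altLen_antipode hx n with h | ⟨-, -, h⟩
  · omega
  · obtain ⟨v, hv⟩ := hne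
    have := h v hv
    have := (hx v hv).1
    omega

/-- The positions below `n` carrying the sign `b`. -/
def signSupport (x : Finset (ℕ × Bool)) (b : Bool) (n : ℕ) : Finset ℕ :=
  (Finset.range n).filter fun i => (i, b) ∈ x

lemma card_signSupport_succ (x : Finset (ℕ × Bool)) (b : Bool) (k : ℕ) :
    (signSupport x b (k + 1)).card = (signSupport x b k).card + if (k, b) ∈ x then 1 else 0 := by
  rw [signSupport, signSupport, Finset.range_add_one, Finset.filter_insert]
  split_ifs <;> simp

lemma altLen_succ_le (x : Finset (ℕ × Bool)) (k : ℕ) :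
    altLen x (k + 1) + (signSupport x true k).card + (signSupport x false k).card ≤
      altLen x k + (signSupport x true (k + 1)).card + (signSupport x false (k + 1)).card := by
  rw [card_signSupport_succ, card_signSupport_succ, altLen]
  by_cases h : altLen x k % 2 = 0 <;> simp only [h, decide_true, decide_false] <;>
    split_ifs <;> omega

/-- If the longest alternating sequence uses all of `x`, then the signs of `x` alternate. -/
lemma altLen_eq_of_le {x : Finset (ℕ × Bool)} {n : ℕ}
    (h : (signSupport x true n).card + (signSupport x false n).card ≤ altLen x n) (k : ℕ)
    (hk : k ≤ n) :
    (signSupport x true k).card + (signSupport x false k).card = altLen x k := by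
  have hle : ∀ k, altLen x k ≤ (signSupport x true k).card + (signSupport x false k).card := by
    intro k
    induction k with
    | zero => exact Nat.zero_le _
    | succ k ih => have := altLen_succ_le x k; omega
  refine le_antisymm ?_ (hle k)
  induction hk using Nat.decreasingInduction with
  | of_succ k _ ih => have := altLen_succ_le x k; omega
  | self => exact h

lemma altLen_mod_two_of_mem {n : ℕ} {x : Finset (ℕ × Bool)} (hx : IsSigned n x)
    (h : (signSupport x true n).card + (signSupport x false n).card ≤ altLen x n)
    {i : ℕ} {b : Bool} (hi : (i, b) ∈ x) :
    altLen x (i + 1) = altLen x i + 1 ∧ (b = true ↔ altLen x i % 2 = 0) := by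
  have hin := (hx _ hi).1
  have hop := (hx _ hi).2
  have h1 := altLen_eq_of_le h i hin.le
  have h2 := altLen_eq_of_le h (i + 1) hin
  rw [card_signSupport_succ, card_signSupport_succ] at h2
  have h3 : altLen x (i + 1) = altLen x i + 1 := by
    cases b <;> simp_all <;> omega
  refine ⟨h3, ?_⟩
  rw [altLen] at h3
  split_ifs at h3 with h4
  · by_cases h5 : altLen x i % 2 = 0 <;> cases b <;> simp_all
  · omega

lemma card_signSupport_of_alternating {n : ℕ} {x : Finset (ℕ × Bool)} (hx : IsSigned n x)
    (h : (signSupport x true n).card + (signSupport x false n).card ≤ altLen x n) (k : ℕ)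
    (hk : k ≤ n) :
    (signSupport x true k).card = (altLen x k + 1) / 2 ∧
      (signSupport x false k).card = altLen x k / 2 := by
  induction k with
  | zero => simp [signSupport, altLen]
  | succ k ih =>
    obtain ⟨h1, h2⟩ := ih (by omega)
    have h3 := altLen_eq_of_le h (k + 1) hk
    rw [card_signSupport_succ, card_signSupport_succ] at h3 ⊢
    by_cases ht : (k, true) ∈ x
    · have := altLen_mod_two_of_mem hx h ht
      have := (hx _ ht).2
      simp_all
      omega
    · by_cases hf : (k, false) ∈ x
      · have := altLen_mod_two_of_mem hx h hf
        simp_all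
        omega
      · simp_all
        omega

lemma sum_card_inter_of_partition {n m : ℕ} {V : Fin m → Finset ℕ}
    (hcover : Finset.univ.biUnion V = Finset.range n)
    (hdisj : ∀ j k : Fin m, j ≠ k → Disjoint (V j) (V k)) {S : Finset ℕ}
    (hS : S ⊆ Finset.range n) : ∑ j, (S ∩ V j).card = S.card := by
  rw [← Finset.card_biUnion fun j _ k _ hjk =>
    (hdisj j k hjk).mono Finset.inter_subset_right Finset.inter_subset_right,
    ← Finset.inter_biUnion, hcover, Finset.inter_eq_left.2 hS]

lemma signSupport_antipode (x : Finset (ℕ × Bool)) (b : Bool) (n : ℕ) :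
    signSupport (antipode x) b n = signSupport x (!b) n := by
  simp [signSupport, mem_antipode]

lemma disjoint_signSupport {n : ℕ} {x : Finset (ℕ × Bool)} (hx : IsSigned n x) :
    Disjoint (signSupport x true n) (signSupport x false n) := by
  rw [Finset.disjoint_left]
  intro i h1 h2
  simp only [signSupport, Finset.mem_filter] at h1 h2
  exact (hx _ h1.2).2 h2.2

/-- Twice the number of elements of `W` with sign `b`, plus one if `r` has sign `b`. -/
def bias (n : ℕ) (W : Finset ℕ) (r : ℕ) (x : Finset (ℕ × Bool)) (b : Bool) : ℕ :=
  2 * (signSupport x b n ∩ W).card + if (r, b) ∈ x then 1 else 0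

lemma bias_mono (n : ℕ) (W : Finset ℕ) (r : ℕ) {x y : Finset (ℕ × Bool)} (h : x ⊆ y) (b : Bool) :
    bias n W r x b ≤ bias n W r y b := by
  have h1 : (signSupport x b n ∩ W).card ≤ (signSupport y b n ∩ W).card :=
    Finset.card_le_card (Finset.inter_subset_inter_right
      (Finset.monotone_filter_right _ fun _ _ hi => h hi))
  unfold bias
  split_ifs with h2 h3
  · omega
  · exact absurd (h h2) h3
  · omega
  · omega

lemma bias_antipode (n : ℕ) (W : Finset ℕ) (r : ℕ) (x : Finset (ℕ × Bool)) (b : Bool) :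
    bias n W r (antipode x) b = bias n W r x (!b) := by
  simp [bias, signSupport_antipode, mem_antipode]

lemma card_inter_add_card_inter {n : ℕ} {x : Finset (ℕ × Bool)} (hx : IsSigned n x)
    (W : Finset ℕ) :
    (signSupport x true n ∩ W).card + (signSupport x false n ∩ W).card =
      ((signSupport x true n ∪ signSupport x false n) ∩ W).card := by
  rw [Finset.union_inter_distrib_right, Finset.card_union_of_disjoint]
  exact (disjoint_signSupport hx).mono Finset.inter_subset_left Finset.inter_subset_left

lemma bias_add_bias_le {n : ℕ} {x : Finset (ℕ × Bool)} (hx : IsSigned n x) (W : Finset ℕ)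
    (r : ℕ) : bias n W r x true + bias n W r x false ≤ 2 * W.card + 1 := by
  have h1 := card_inter_add_card_inter hx W
  have h2 : ((signSupport x true n ∪ signSupport x false n) ∩ W).card ≤ W.card :=
    Finset.card_le_card Finset.inter_subset_right
  have h3 : (r, true) ∈ x → (r, false) ∉ x := fun h => (hx _ h).2
  unfold bias
  split_ifs with h4 h5
  · exact absurd h5 (h3 h4)
  all_goals omega

lemma card_inter_add_lt_of_bias_le {n : ℕ} {x : Finset (ℕ × Bool)} (hx : IsSigned n x)
    {W : Finset ℕ} {r : ℕ} (hr : r ∈ W) (h : ∀ b, bias n W r x b ≤ W.card) :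
    (signSupport x true n ∩ W).card + (signSupport x false n ∩ W).card < W.card := by
  have h1 := card_inter_add_card_inter hx W
  have ht := h true
  have hf := h false
  unfold bias at ht hf
  by_contra hlt
  have hle : W.card ≤ ((signSupport x true n ∪ signSupport x false n) ∩ W).card := by omega
  have hW := Finset.eq_of_subset_of_card_le Finset.inter_subset_right hle
  rw [← hW] at hr
  simp only [signSupport, Finset.mem_inter, Finset.mem_union, Finset.mem_filter] at hr
  rcases hr.1 with h2 | h2
  · rw [if_pos h2.2] at ht
    split_ifs at hf <;> omega
  · rw [if_pos h2.2] at hf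
    split_ifs at ht <;> omega

/-- A potential which ranks `s` by its largest element and, for `s` empty, is `a` cut off below
`N`. -/
def rankOr {m : ℕ} (N a : ℕ) (s : Finset (Fin m)) : ℕ :=
  max (min a (N - 1)) (s.sup fun j => N + j)

lemma rankOr_mono {m N a a' : ℕ} {s s' : Finset (Fin m)} (ha : a ≤ a') (hs : s ⊆ s') :
    rankOr N a s ≤ rankOr N a' s' :=
  max_le_max (min_le_min_right _ ha) (Finset.sup_mono hs)

lemma rankOr_lt_rankOr {m N a a' : ℕ} (hN : 0 < N) {s s' : Finset (Fin m)} {j : Fin m}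
    (hj : j ∈ s') (h : ∀ i ∈ s, i < j) : rankOr N a s < rankOr N a' s' := by
  have h1 : N + (j : ℕ) ≤ rankOr N a' s' :=
    (Finset.le_sup (f := fun j : Fin m => N + (j : ℕ)) hj).trans (le_max_right _ _)
  refine lt_of_lt_of_le (max_lt ?_ ?_) h1
  · have := min_le_right a (N - 1)
    omega
  · rw [Finset.sup_lt_iff (by rw [bot_eq_zero]; omega)]
    intro i hi
    have : (i : ℕ) < j := h i hi
    omega

lemma rankOr_lt {m N a : ℕ} (hN : 0 < N) (s : Finset (Fin m)) : rankOr N a s < N + m := by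
  refine max_lt ?_ ?_
  · have := min_le_right a (N - 1)
    omega
  · rw [Finset.sup_lt_iff (by rw [bot_eq_zero]; omega)]
    intro i _
    omega

/-- Some signed set has a long alternating sequence without being biased on any part. -/
lemma exists_unbiased_le_altLen {n m : ℕ} (hmn : m ≤ n) (V : Fin m → Finset ℕ) (r : Fin m → ℕ) :
    ∃ x, IsSigned n x ∧ (∀ j b, bias n (V j) (r j) x b ≤ (V j).card) ∧ n - m ≤ altLen x n := by
  by_contra! hno
  have hN : 0 < n - m := by
    refine (Nat.zero_le _).trans_lt (hno ∅ (by simp [IsSigned]) fun j b => ?_)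
    simp [bias, signSupport]
  set s : Finset (ℕ × Bool) → Bool → Finset (Fin m) := fun x b =>
    Finset.univ.filter fun j => (V j).card < bias n (V j) (r j) x b with hs
  have hmem : ∀ x b j, j ∈ s x b ↔ (V j).card < bias n (V j) (r j) x b := by simp [hs]
  have hanti : ∀ x, s (antipode x) true = s x false := by simp [hs, bias_antipode]
  obtain ⟨x, hx⟩ := exists_le_of_monotone_of_antipode_ne (n := n)
    (A := fun x => rankOr (n - m) (altLen x n) (s x true))
    (fun x y hxy => rankOr_mono (altLen_mono hxy n) fun j hj =>
      (hmem _ _ _).2 (((hmem _ _ _).1 hj).trans_le (bias_mono _ _ _ hxy _)))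
    (by
      intro x hx hne
      simp only [hanti]
      have hex : ∀ j ∈ s x true, j ∉ s x false := by
        intro j h1 h2
        rw [hmem] at h1 h2
        have := bias_add_bias_le hx (V j) (r j)
        omega
      rcases (s x true ∪ s x false).eq_empty_or_nonempty with he | hu
      · rw [Finset.union_eq_empty] at he
        have hunb : ∀ j b, bias n (V j) (r j) x b ≤ (V j).card := by
          intro j b
          rw [← not_lt, ← hmem]
          cases b
          · simp [he.2]
          · simp [he.1]
        have h1 := hno x hx hunb
        have h2 : altLen (antipode x) n < n - m := by
          refine hno _ ?_ fun j b => by rw [bias_antipode]; exact hunb j _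
          rintro ⟨i, b⟩ hi
          rw [mem_antipode] at hi ⊢
          exact hx _ hi
        have h3 := altLen_ne_altLen_antipode hx hne
        simp only [he.1, he.2, rankOr, Finset.sup_empty, bot_eq_zero]
        omega
      · have hj := Finset.max'_mem _ hu
        have hmax : ∀ i ∈ s x true ∪ s x false, i ≤ (s x true ∪ s x false).max' hu :=
          fun i hi => Finset.le_max' _ i hi
        generalize (s x true ∪ s x false).max' hu = j at hj hmax
        rcases Finset.mem_union.1 hj with h | h
        · refine (rankOr_lt_rankOr hN h fun i hi => ?_).ne
          refine lt_of_le_of_ne (hmax i (Finset.mem_union_right _ hi)) ?_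
          rintro rfl
          exact hex _ h hi
        · refine (rankOr_lt_rankOr hN h fun i hi => ?_).ne'
          refine lt_of_le_of_ne (hmax i (Finset.mem_union_left _ hi)) ?_
          rintro rfl
          exact hex _ hi h)
  have := rankOr_lt (a := altLen x n) hN (s x true)
  omega


/-- Corollary: fair splitting of a cycle on vertices `0,...,n-1`
(edges `{i, (i+1) % n}`). One of the two sets is independent of size
`⌊(n-m)/2⌋`; the other induces at most `⌈(n-m)/2⌉ - ⌊(n-m)/2⌋` edges. -/
theorem fair_cycle_split (n m : ℕ) (hn : 3 ≤ n) (V : Fin m → Finset ℕ)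
    (hcover : Finset.univ.biUnion V = Finset.range n)
    (hdisj : ∀ j k : Fin m, j ≠ k → Disjoint (V j) (V k))
    (hne : ∀ j, (V j).Nonempty) :
    ∃ S₁ S₂ : Finset ℕ,
      S₁ ⊆ Finset.range n ∧ S₂ ⊆ Finset.range n ∧
      Disjoint S₁ S₂ ∧
      (∀ j, (S₁ ∩ V j).card + (S₂ ∩ V j).card = (V j).card - 1) ∧
      S₁.card ≤ S₂.card + 1 ∧ S₂.card ≤ S₁.card + 1 ∧
      (∀ j, ((V j).card : ℚ) / 2 - 1 ≤ ((S₁ ∩ V j).card : ℚ) ∧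
            ((V j).card : ℚ) / 2 - 1 ≤ ((S₂ ∩ V j).card : ℚ)) ∧
      (((∀ i ∈ S₁, (i + 1) % n ∉ S₁) ∧ S₁.card = (n - m) / 2 ∧
          ((Finset.range n).filter (fun i => i ∈ S₂ ∧ (i + 1) % n ∈ S₂)).card ≤
            (n - m + 1) / 2 - (n - m) / 2) ∨
       ((∀ i ∈ S₂, (i + 1) % n ∉ S₂) ∧ S₂.card = (n - m) / 2 ∧
          ((Finset.range n).filter (fun i => i ∈ S₁ ∧ (i + 1) % n ∈ S₁)).card ≤
            (n - m + 1) / 2 - (n - m) / 2)) := by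
  have hpart : ∀ S ⊆ Finset.range n, ∑ j, (S ∩ V j).card = S.card :=
    fun S hS => sum_card_inter_of_partition hcover hdisj hS
  have hVsub : ∀ j, V j ⊆ Finset.range n := fun j =>
    hcover ▸ Finset.subset_biUnion_of_mem V (Finset.mem_univ j)
  have hsum : ∑ j, (V j).card = n := by
    have h := hpart (Finset.range n) subset_rfl
    simpa only [Finset.inter_eq_right.2 (hVsub _), Finset.card_range] using h
  have hmn : m ≤ n := by
    have h : ∑ _j : Fin m, 1 ≤ ∑ j, (V j).card :=
      Finset.sum_le_sum fun j _ => (hne j).card_pos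
    simpa [hsum] using h
  choose r hr using hne
  obtain ⟨x, hx, hunb, halt⟩ := exists_unbiased_le_altLen hmn V r
  have hlt : ∀ j, (signSupport x true n ∩ V j).card + (signSupport x false n ∩ V j).card + 1 ≤
      (V j).card := fun j => card_inter_add_lt_of_bias_le hx (hr j) (hunb j)
  have hsub : ∀ b, signSupport x b n ⊆ Finset.range n := fun b => Finset.filter_subset _ _
  have hmem : ∀ i b, i ∈ signSupport x b n ↔ (i, b) ∈ x := fun i b => by
    simpa [signSupport] using fun h => (hx _ h).1
  have hcard : ∑ j, ((signSupport x true n ∩ V j).card + (signSupport x false n ∩ V j).card + 1)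
      = (signSupport x true n).card + (signSupport x false n).card + m := by
    rw [Finset.sum_add_distrib, Finset.sum_add_distrib, hpart _ (hsub _), hpart _ (hsub _)]
    simp
  have hle := Finset.sum_le_sum fun j (_ : j ∈ Finset.univ) => hlt j
  rw [hcard, hsum] at hle
  have hlen : (signSupport x true n).card + (signSupport x false n).card ≤ altLen x n := by omega
  have halt_eq := altLen_eq_of_le hlen n le_rfl
  obtain ⟨hc1, hc2⟩ := card_signSupport_of_alternating hx hlen n le_rfl
  have hall : ∀ j, (signSupport x true n ∩ V j).card + (signSupport x false n ∩ V j).card + 1 =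
      (V j).card := by
    have h := (Finset.sum_eq_sum_iff_of_le fun j (_ : j ∈ Finset.univ) => hlt j).1
      (by rw [hcard, hsum]; omega)
    exact fun j => h j (Finset.mem_univ j)
  have hstep := fun i b (h : (i, b) ∈ x) => altLen_mod_two_of_mem hx hlen h
  refine ⟨signSupport x true n, signSupport x false n, hsub _, hsub _, disjoint_signSupport hx,
    fun j => by have := hall j; omega, by omega, by omega, fun j => ?_,
    Or.inr ⟨fun i hi hi' => ?_, by omega, ?_⟩⟩
  · have h1 := hall j
    have h2 := hunb j true
    have h3 := hunb j false
    unfold bias at h2 h3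
    have h4 : (V j).card ≤ 2 * (signSupport x true n ∩ V j).card + 2 := by omega
    have h5 : (V j).card ≤ 2 * (signSupport x false n ∩ V j).card + 2 := by omega
    have h6 : ((V j).card : ℚ) ≤ 2 * ((signSupport x true n ∩ V j).card : ℚ) + 2 := by
      exact_mod_cast h4
    have h7 : ((V j).card : ℚ) ≤ 2 * ((signSupport x false n ∩ V j).card : ℚ) + 2 := by
      exact_mod_cast h5
    constructor <;> linarith
  · have hin := Finset.mem_range.1 (hsub _ hi)
    rw [hmem] at hi hi'
    have h1 := hstep _ _ hi
    have h2 := hstep _ _ hi'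
    rcases (Nat.add_one_le_iff.2 hin).eq_or_lt with h | h
    · rw [h, Nat.mod_self] at h2
      simp [altLen] at h2
    · rw [Nat.mod_eq_of_lt h] at h2
      simp only [Bool.false_eq_true, false_iff] at h1 h2
      omega
  · have hsing : ∀ i ∈ (Finset.range n).filter (fun i => i ∈ signSupport x true n ∧
        (i + 1) % n ∈ signSupport x true n), i = n - 1 ∧ (n - m) % 2 = 1 := by
      intro i hi
      simp only [Finset.mem_filter, Finset.mem_range, hmem] at hi
      obtain ⟨hin, hi, hi'⟩ := hi
      have h1 := hstep _ _ hi
      have h2 := hstep _ _ hi'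
      simp only [true_iff] at h1 h2
      rcases (Nat.add_one_le_iff.2 hin).eq_or_lt with h | h
      · rw [h] at h1
        omega
      · rw [Nat.mod_eq_of_lt h] at h2
        omega
    rcases Nat.mod_two_eq_zero_or_one (n - m) with h | h
    · rw [Finset.filter_eq_empty_iff.2, Finset.card_empty]
      · exact Nat.zero_le _
      · intro i hi hi'
        have := (hsing i (Finset.mem_filter.2 ⟨hi, hi'⟩)).2
        omega
    · refine (Finset.card_le_one.2 fun a ha b hb =>
        (hsing a ha).1.trans (hsing b hb).1.symm).trans ?_
      omega
end

section
/- If x and y are sign vectors in {+,-,0}^n \ {0} with x ⪯ y and alt(x) = alt(y), then the first nonzero coordinates of x and y are equal. -/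
/-- `altSeq x` is the maximum length of an alternating subsequence of the sign
vector `x`: a subsequence all of whose terms are nonzero and in which any two
consecutive terms differ. -/
noncomputable def altSeq {n : ℕ} (x : Fin n → SignType) : ℕ :=
  sSup {k | ∃ l : List SignType, l.Sublist (List.ofFn x) ∧
    (∀ a ∈ l, a ≠ 0) ∧ l.Chain' (· ≠ ·) ∧ l.length = k}

theorem bddAbove_altSeq {n : ℕ} (x : Fin n → SignType) :
    BddAbove {k | ∃ l : List SignType, l.Sublist (List.ofFn x) ∧
      (∀ a ∈ l, a ≠ 0) ∧ l.IsChain (· ≠ ·) ∧ l.length = k} := by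
  refine ⟨n, ?_⟩
  rintro k ⟨l, hl, -, -, rfl⟩
  simpa using hl.length_le

theorem length_le_altSeq {n : ℕ} {x : Fin n → SignType} {l : List SignType}
    (hl : l.Sublist (List.ofFn x)) (h0 : ∀ a ∈ l, a ≠ 0) (hc : l.IsChain (· ≠ ·)) :
    l.length ≤ altSeq x :=
  le_csSup (bddAbove_altSeq x) ⟨l, hl, h0, hc, rfl⟩

theorem exists_length_eq_altSeq {n : ℕ} (x : Fin n → SignType) :
    ∃ l : List SignType, l.Sublist (List.ofFn x) ∧
      (∀ a ∈ l, a ≠ 0) ∧ l.IsChain (· ≠ ·) ∧ l.length = altSeq x :=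
  Nat.sSup_mem (s := {k | ∃ l : List SignType, l.Sublist (List.ofFn x) ∧
      (∀ a ∈ l, a ≠ 0) ∧ l.IsChain (· ≠ ·) ∧ l.length = k})
    ⟨0, [], by simp⟩ (bddAbove_altSeq x)

/-- A coordinate that differs from the head of an alternating list taken from later coordinates
extends that list. -/
theorem length_lt_altSeq {n : ℕ} {x : Fin n → SignType} {i : Fin n} (hi : x i ≠ 0)
    {l : List SignType} (hl : l.Sublist ((List.ofFn x).drop (i + 1)))
    (h0 : ∀ a ∈ l, a ≠ 0) (hc : l.IsChain (· ≠ ·)) (hd : ∀ a ∈ l.head?, x i ≠ a) :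
    l.length < altSeq x := by
  have hsub : (x i :: l).Sublist (List.ofFn x) := by
    have hdrop : (List.ofFn x).drop i = x i :: (List.ofFn x).drop (i + 1) := by
      rw [List.drop_eq_getElem_cons (by simp)]
      simp
    exact (hdrop ▸ hl.cons_cons (x i)).trans (List.drop_sublist _ _)
  exact length_le_altSeq hsub (by simpa using ⟨hi, h0⟩) (List.isChain_cons.2 ⟨hd, hc⟩)

/-- A list of nonzero entries avoids an initial segment of zeros. -/
theorem sublist_drop_of_take_eq_zero {α : Type*} [Zero α] {l s : List α} {k : ℕ}
    (hl : l.Sublist s) (h0 : ∀ a ∈ l, a ≠ 0) (hs : ∀ a ∈ s.take k, a = 0) :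
    l.Sublist (s.drop k) := by
  rw [← List.take_append_drop k s, List.sublist_append_iff] at hl
  obtain ⟨l₁, l₂, rfl, h₁, h₂⟩ := hl
  obtain rfl : l₁ = [] := List.eq_nil_iff_forall_not_mem.2 fun a ha =>
    h0 a (List.mem_append_left _ ha) (hs a (h₁.subset ha))
  simpa using h₂

theorem sublist_of_forall₂ {α : Type*} [Zero α] {s t : List α}
    (h : List.Forall₂ (fun a b => a ≠ 0 → a = b) s t) {l : List α}
    (hl : l.Sublist s) (h0 : ∀ a ∈ l, a ≠ 0) : l.Sublist t := by
  induction h generalizing l with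
  | nil => exact hl
  | cons hab _ ih =>
    cases hl with
    | cons _ hl => exact (ih hl h0).cons _
    | cons_cons _ hl =>
      rw [← hab (h0 _ List.mem_cons_self)]
      exact (ih hl fun a ha => h0 a (List.mem_cons_of_mem _ ha)).cons_cons _

theorem eq_zero_of_mem_take_ofFn {α : Type*} [Zero α] {n k : ℕ} {x : Fin n → α}
    (h : ∀ m : Fin n, (m : ℕ) < k → x m = 0) : ∀ a ∈ (List.ofFn x).take k, a = 0 := by
  intro a ha
  obtain ⟨m, hm, rfl⟩ := List.mem_iff_getElem.1 ha
  simp only [List.length_take, List.length_ofFn, lt_inf_iff] at hm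
  simpa using h ⟨m, hm.2⟩ hm.1

/-- If `x ⪯ y` are nonzero sign vectors with `alt x = alt y`, then their first
nonzero coordinates are equal. -/
theorem first_nonzero_eq {n : ℕ} (x y : Fin n → SignType) (hx : x ≠ 0) (hy : y ≠ 0)
    (hle : ∀ i, x i ≠ 0 → x i = y i) (halt : altSeq x = altSeq y)
    (i j : Fin n) (hxi : x i ≠ 0) (hxi' : ∀ k, k < i → x k = 0)
    (hyj : y j ≠ 0) (hyj' : ∀ k, k < j → y k = 0) :
    x i = y j := by
  by_contra hne
  have hji : j < i := by
    rcases lt_trichotomy i j with h | rfl | h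
    · exact absurd ((hle i hxi).trans (hyj' i h)) hxi
    · exact absurd (hle i hxi) hne
    · exact h
  obtain ⟨l, hl, h0, hc, hlen⟩ := exists_length_eq_altSeq x
  have hforall : List.Forall₂ (fun a b : SignType => a ≠ 0 → a = b)
      ((List.ofFn x).drop (j + 1)) ((List.ofFn y).drop (j + 1)) :=
    List.forall₂_drop _ (List.forall₂_iff_get.2 ⟨by simp, by
      intro m h₁ h₂
      simpa using hle ⟨m, by simpa using h₁⟩⟩)
  have hly : l.Sublist ((List.ofFn y).drop (j + 1)) :=
    sublist_of_forall₂ hforall (sublist_drop_of_take_eq_zero hl h0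
      (eq_zero_of_mem_take_ofFn fun m hm => hxi' m (by omega))) h0
  by_cases hd : ∀ a ∈ l.head?, y j ≠ a
  · exact (length_lt_altSeq hyj hly h0 hc hd).ne (hlen.trans halt)
  · push Not at hd
    obtain ⟨a, ha, rfl⟩ := hd
    have hlx : l.Sublist ((List.ofFn x).drop i) :=
      sublist_drop_of_take_eq_zero hl h0 (eq_zero_of_mem_take_ofFn fun m hm => hxi' m hm)
    rw [List.drop_eq_getElem_cons (by simp)] at hlx
    cases hlx with
    | cons _ hlx =>
      refine (length_lt_altSeq hxi hlx h0 hc fun b hb => ?_).ne hlen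
      rwa [Option.mem_unique hb ha]
    | cons_cons _ _ => exact hne (by simpa using ha)
end

section
/- Let q be a positive integer and suppose a necklace (a sequence of n beads each colored with one of m colors) has a_j beads of color j, where the remainder of a_j modulo q lies in {0, 1, q-1} for every j. Then for any prescribed choice, for each j with q ∤ a_j, of which thieves receive ⌈a_j/q⌉ beads of color j (one thief if a_j ≡ 1, and q-1 thieves if a_j ≡ -1 mod q), there exists a fair q-splitting of the necklace using at most (q-1)m cuts realizing that choice. -/
open Finset

section ListCochains

variable {V W R : Type*} [CommRing R]

/-- The coboundary of a cochain on ordered tuples: the alternating sum over all deletions. -/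
def cobd : List V → (List V → R) → R
  | [], _ => 0
  | v :: l, φ => φ l - cobd l (fun x => φ (v :: x))

/-- The prism operator between the maps `O` and `O'`, acting on cochains. -/
def prism (O O' : V → V) : List V → (List V → R) → R
  | [], _ => 0
  | v :: l, φ => φ (O v :: O' v :: l.map O') - prism O O' l (fun l' => φ (O v :: l'))

lemma cobd_add (l : List V) (φ ψ : List V → R) :
    cobd l (fun x => φ x + ψ x) = cobd l φ + cobd l ψ := by
  induction l generalizing φ ψ with
  | nil => simp [cobd]
  | cons v l ih => simp only [cobd, ih]; ring

lemma cobd_smul (r : R) (l : List V) (φ : List V → R) :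
    cobd l (fun x => r * φ x) = r * cobd l φ := by
  induction l generalizing φ with
  | nil => simp [cobd]
  | cons v l ih => simp only [cobd, ih]; ring

lemma prism_add (O O' : V → V) (l : List V) (φ ψ : List V → R) :
    prism O O' l (fun x => φ x + ψ x) = prism O O' l φ + prism O O' l ψ := by
  induction l generalizing φ ψ with
  | nil => simp [prism]
  | cons v l ih => simp only [prism, ih]; ring

lemma prism_smul (O O' : V → V) (r : R) (l : List V) (φ : List V → R) :
    prism O O' l (fun x => r * φ x) = r * prism O O' l φ := by
  induction l generalizing φ with
  | nil => simp [prism]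
  | cons v l ih => simp only [prism, ih]; ring

lemma cobd_sub (l : List V) (φ ψ : List V → R) :
    cobd l (fun x => φ x - ψ x) = cobd l φ - cobd l ψ := by
  have h := cobd_add l φ (fun x => (-1) * ψ x)
  rw [cobd_smul] at h
  have e : (fun x => φ x - ψ x) = (fun x => φ x + (-1) * ψ x) := by
    funext x; ring
  rw [e, h]; ring

lemma prism_sub (O O' : V → V) (l : List V) (φ ψ : List V → R) :
    prism O O' l (fun x => φ x - ψ x) = prism O O' l φ - prism O O' l ψ := by
  have h := prism_add O O' l φ (fun x => (-1) * ψ x)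
  rw [prism_smul] at h
  have e : (fun x => φ x - ψ x) = (fun x => φ x + (-1) * ψ x) := by
    funext x; ring
  rw [e, h]; ring

lemma cobd_map (f : V → W) (l : List V) (φ : List W → R) :
    cobd (l.map f) φ = cobd l (fun l' => φ (l'.map f)) := by
  induction l generalizing φ with
  | nil => simp [cobd]
  | cons v l ih => simp only [cobd, List.map_cons, ih]

lemma cobd_cobd (l : List V) (φ : List V → R) : cobd l (fun l' => cobd l' φ) = 0 := by
  induction l generalizing φ with
  | nil => simp [cobd]
  | cons v l ih =>
    simp only [cobd, cobd_sub, ih]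
    ring

lemma prism_cobd (O O' : V → V) (l : List V) (φ : List V → R) :
    prism O O' l (fun l' => cobd l' φ) + cobd l (fun l' => prism O O' l' φ) =
      φ (l.map O') - φ (l.map O) := by
  induction l generalizing φ with
  | nil => simp [cobd, prism]
  | cons v l ih =>
    have h := ih (fun l' => φ (O v :: l'))
    simp only [cobd, prism, prism_sub, cobd_sub, List.map_cons, cobd_map] at h ⊢
    linear_combination h

lemma cobd_eq_zero (l : List V) (φ : List V → R) (h : ∀ l', l'.Sublist l → φ l' = 0) :
    cobd l φ = 0 := by
  induction l generalizing φ with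
  | nil => simp [cobd]
  | cons v l ih =>
    rw [cobd, h l (List.sublist_cons_self v l), ih _ fun l' hl' => h _ (hl'.cons_cons v), sub_zero]

lemma prism_eq_zero (O O' : V → V) (l : List V) (φ : List V → R)
    (h : ∀ l' : List V, l'.length = l.length + 1 →
      (∀ x ∈ l', ∃ v ∈ l, x = O v ∨ x = O' v) → φ l' = 0) :
    prism O O' l φ = 0 := by
  induction l generalizing φ with
  | nil => simp [prism]
  | cons v l ih =>
    rw [prism, h _ (by simp) (by simp; grind), ih, sub_zero]
    intro l' hl hm
    exact h _ (by simp [hl]) (by simp; grind)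

/-- Pullback of cochains along a map of vertices. -/
def pull (R : Type*) [CommRing R] (f : V → W) : (List W → R) →ₗ[R] (List V → R) :=
  LinearMap.funLeft R R (List.map f)

@[simp] lemma pull_apply (f : V → W) (φ : List W → R) (l : List V) :
    pull R f φ l = φ (l.map f) := rfl

/-- The coboundary as a linear endomorphism. -/
def cobdHom (V R : Type*) [CommRing R] : Module.End R (List V → R) where
  toFun φ l := cobd l φ
  map_add' φ ψ := by funext l; exact cobd_add l φ ψ
  map_smul' r φ := by funext l; exact cobd_smul r l φ

@[simp] lemma cobdHom_apply (φ : List V → R) (l : List V) : cobdHom V R φ l = cobd l φ := rfl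

lemma cobdHom_cobdHom (φ : List V → R) : cobdHom V R (cobdHom V R φ) = 0 := by
  funext l; exact cobd_cobd l φ

lemma cobdHom_pull (f : V → W) (φ : List W → R) :
    cobdHom V R (pull R f φ) = pull R f (cobdHom W R φ) := by
  funext l
  exact (cobd_map f l φ).symm

/-- The prism operator as a linear endomorphism. -/
def prismHom (R : Type*) [CommRing R] (O O' : V → V) : Module.End R (List V → R) where
  toFun φ l := prism O O' l φ
  map_add' φ ψ := by funext l; exact prism_add O O' l φ ψ
  map_smul' r φ := by funext l; exact prism_smul O O' r l φ

@[simp] lemma prismHom_apply (f g : V → V) (φ : List V → R) (l : List V) :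
    prismHom R f g φ l = prism f g l φ := rfl

/-- The sum of the prism operators between consecutive maps of a sequence. -/
def prismSum (R : Type*) [CommRing R] (O : ℕ → V → V) (K : ℕ) : Module.End R (List V → R) :=
  ∑ i ∈ range K, prismHom R (O (i + 1)) (O i)

lemma prismSum_apply (O : ℕ → V → V) (K : ℕ) (φ : List V → R) (l : List V) :
    prismSum R O K φ l = ∑ i ∈ range K, prism (O (i + 1)) (O i) l φ := by
  simp [prismSum]

lemma prismSum_cobdHom (O : ℕ → V → V) (K : ℕ) (φ : List V → R) :
    prismSum R O K (cobdHom V R φ) =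
      pull R (O 0) φ - pull R (O K) φ - cobdHom V R (prismSum R O K φ) := by
  rw [eq_sub_iff_add_eq]
  induction K with
  | zero => simp [prismSum]
  | succ K ih =>
    have h : prismHom R (O (K + 1)) (O K) (cobdHom V R φ) +
        cobdHom V R (prismHom R (O (K + 1)) (O K) φ) = pull R (O K) φ - pull R (O (K + 1)) φ := by
      funext l
      exact prism_cobd _ _ l φ
    simp only [prismSum, sum_range_succ, LinearMap.add_apply, map_add] at ih ⊢
    linear_combination ih + h

/-- The elements `g - 1` (for even `k`) and `1 + g + ⋯ + g ^ (p - 1)` (for odd `k`) of the group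
ring, acting on cochains. -/
def alternator (R : Type*) [CommRing R] (p : ℕ) (g : V → V) (k : ℕ) :
    Module.End R (List V → R) :=
  if Even k then pull R g - 1 else ∑ i ∈ range p, (pull R g) ^ i

lemma pull_pow_apply (g : V → V) (i : ℕ) (φ : List V → R) (l : List V) :
    ((pull R g) ^ i : Module.End R (List V → R)) φ l = φ (l.map g^[i]) := by
  induction i generalizing l with
  | zero => simp
  | succ i ih =>
    rw [pow_succ', Module.End.mul_apply, pull_apply, ih, List.map_map, Function.iterate_succ]

lemma alternator_even (p : ℕ) (g : V → V) {k : ℕ} (hk : Even k) (φ : List V → R) (l : List V) :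
    alternator R p g k φ l = φ (l.map g) - φ l := by
  simp [alternator, hk]

lemma alternator_odd (p : ℕ) (g : V → V) {k : ℕ} (hk : ¬ Even k) (φ : List V → R) (l : List V) :
    alternator R p g k φ l = ∑ i ∈ range p, φ (l.map g^[i]) := by
  simp [alternator, hk, pull_pow_apply]

lemma alternator_alternator {p : ℕ} {g : V → V} (hg : g^[p] = id) (k : ℕ) (φ : List V → R) :
    alternator R p g k (alternator R p g (k + 1) φ) = 0 := by
  have hp : (pull R g : Module.End R (List V → R)) ^ p = 1 := by
    ext φ l
    simp [pull_pow_apply, hg]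
  rw [← Module.End.mul_apply]
  by_cases hk : Even k
  · have hk' : ¬ Even (k + 1) := by simpa [Nat.even_add_one] using hk
    rw [alternator, alternator, if_pos hk, if_neg hk', mul_geom_sum, hp, sub_self,
      LinearMap.zero_apply]
  · have hk' : Even (k + 1) := by simpa [Nat.even_add_one] using hk
    rw [alternator, alternator, if_neg hk, if_pos hk', geom_sum_mul, hp, sub_self,
      LinearMap.zero_apply]

lemma alternator_pull {p : ℕ} {g : V → V} {g' : W → W} {f : V → W} (h : ∀ v, f (g v) = g' (f v))
    (k : ℕ) (φ : List W → R) :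
    alternator R p g k (pull R f φ) = pull R f (alternator R p g' k φ) := by
  have hi : ∀ i v, f (g^[i] v) = g'^[i] (f v) := fun i v =>
    (Function.Semiconj.iterate_right (f := f) (ga := g) (gb := g') h i) v
  funext l
  by_cases hk : Even k
  · simp [alternator_even _ _ hk, Function.comp_def, h]
  · simp [alternator_odd _ _ hk, Function.comp_def, hi]

lemma alternator_cobdHom (p : ℕ) (g : V → V) (k : ℕ) (φ : List V → R) :
    alternator R p g k (cobdHom V R φ) = cobdHom V R (alternator R p g k φ) := by
  by_cases hk : Even k
  · simp [alternator, hk, cobdHom_pull]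
  · simp only [alternator, hk, if_false, LinearMap.sum_apply, map_sum]
    refine sum_congr rfl fun i hi => ?_
    clear hi
    induction i with
    | zero => simp
    | succ i ih => rw [pow_succ', Module.End.mul_apply, ih, Module.End.mul_apply, cobdHom_pull]

lemma alternator_nil (p : ℕ) [CharP R p] (g : V → V) (k : ℕ) (φ : List V → R) :
    alternator R p g k φ [] = 0 := by
  by_cases hk : Even k
  · simp [alternator_even _ _ hk]
  · simp [alternator_odd _ _ hk]

/-- Evaluation of a cochain on the `k`-th chain of the resolution obtained by iterating the
prism construction, starting at the vertex `v₀`. -/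
def evalChain (R : Type*) [CommRing R] (p : ℕ) (g : V → V) (O : ℕ → V → V) (K : ℕ) (v₀ : V) :
    ℕ → (List V → R) →ₗ[R] R
  | 0 => LinearMap.proj [v₀]
  | k + 1 => evalChain R p g O K v₀ k ∘ₗ alternator R p g k ∘ₗ prismSum R O K

lemma evalChain_zero (p : ℕ) (g : V → V) (O : ℕ → V → V) (K : ℕ) (v₀ : V) (φ : List V → R) :
    evalChain R p g O K v₀ 0 φ = φ [v₀] := rfl

lemma evalChain_succ (p : ℕ) (g : V → V) (O : ℕ → V → V) (K : ℕ) (v₀ : V) (k : ℕ)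
    (φ : List V → R) :
    evalChain R p g O K v₀ (k + 1) φ =
      evalChain R p g O K v₀ k (alternator R p g k (prismSum R O K φ)) := rfl

lemma evalChain_cobdHom {p : ℕ} [CharP R p] {g : V → V} (hg : g^[p] = id) {O : ℕ → V → V}
    {K : ℕ} (v₀ : V) (h0 : O 0 = id) (hK : ∀ v w, O K v = O K w) (k : ℕ) (φ : List V → R) :
    evalChain R p g O K v₀ (k + 1) (cobdHom V R φ) =
      evalChain R p g O K v₀ k (alternator R p g k φ) := by
  induction k generalizing φ with
  | zero =>
    have e0 : pull R (O 0) φ = φ := by funext l; simp [h0]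
    rw [evalChain_succ, prismSum_cobdHom, e0, map_sub, map_sub, alternator_cobdHom]
    simp only [evalChain_zero, Pi.sub_apply, cobdHom_apply, cobd,
      alternator_even p g Even.zero]
    simp [hK (g v₀) v₀]
  | succ k ih =>
    have e0 : pull R (O 0) φ = φ := by funext l; simp [h0]
    have eK : alternator R p g (k + 1) (pull R (O K) φ) = 0 := by
      have hc : ∀ f : V → V, O K ∘ f = O K := fun f => funext fun v => hK _ _
      funext l
      by_cases hk : Even (k + 1)
      · simp [alternator_even p g hk, hc]
      · simp [alternator_odd p g hk, hc]
    rw [evalChain_succ, prismSum_cobdHom, e0, map_sub, map_sub, alternator_cobdHom,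
      map_sub, map_sub, ih, alternator_alternator hg, eK]
    simp

lemma evalChain_eq_zero {p : ℕ} {g : V → V} {O : ℕ → V → V} {K : ℕ} {v₀ : V}
    {Good : ℕ → List V → Prop} (good0 : Good 0 [v₀])
    (goodg : ∀ k l, Good k l → Good k (l.map g))
    (goodO : ∀ k l, Good k l → ∀ i < K, ∀ l' : List V, l'.length = l.length + 1 →
      (∀ x ∈ l', ∃ v ∈ l, x = O (i + 1) v ∨ x = O i v) → Good (k + 1) l')
    (k : ℕ) (φ : List V → R) (h : ∀ l, Good k l → φ l = 0) :
    evalChain R p g O K v₀ k φ = 0 := by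
  induction k generalizing φ with
  | zero => exact h _ good0
  | succ k ih =>
    rw [evalChain_succ]
    apply ih
    have hP : ∀ l, Good k l → prismSum R O K φ l = 0 := by
      intro l hl
      rw [prismSum_apply]
      refine sum_eq_zero fun i hi => prism_eq_zero _ _ _ _ fun l' h1 h2 => ?_
      exact h _ (goodO k l hl i (mem_range.1 hi) l' h1 h2)
    have goodi : ∀ i l, Good k l → Good k (l.map g^[i]) := by
      intro i
      induction i with
      | zero => simp
      | succ i ihi =>
        intro l hl
        rw [Function.iterate_succ, ← List.map_map]
        exact ihi _ (goodg _ _ hl)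
    intro l hl
    by_cases hk : Even k
    · rw [alternator_even p g hk, hP _ hl, hP _ (goodg _ _ hl), sub_zero]
    · rw [alternator_odd p g hk]
      exact sum_eq_zero fun i _ => hP _ (goodi i _ hl)

end ListCochains

section LabelCochains

variable {L R : Type*} [CommRing R]

/-- Alternating cochains on ordered tuples. -/
def IsAlt (φ : List L → R) : Prop :=
  ∀ s t : List L, ∀ a b : L,
    φ (s ++ a :: b :: t) + φ (s ++ b :: a :: t) = 0 ∧ φ (s ++ a :: a :: t) = 0

lemma IsAlt.cons {φ : List L → R} (h : IsAlt φ) (x : L) : IsAlt fun l => φ (x :: l) :=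
  fun s t a b => h (x :: s) t a b

lemma IsAlt.cobd {φ : List L → R} (h : IsAlt φ) : IsAlt fun l => cobd l φ := by
  intro s t a b
  induction s generalizing φ with
  | nil =>
    have h1 : ∀ l, φ (a :: b :: l) + φ (b :: a :: l) = 0 := fun l => (h [] l a b).1
    have h2 : ∀ l, φ (a :: a :: l) = 0 := fun l => (h [] l a b).2
    have h3 := cobd_add t (fun l => φ (a :: b :: l)) (fun l => φ (b :: a :: l))
    have h4 := cobd_eq_zero t (fun l => φ (a :: b :: l) + φ (b :: a :: l)) fun l _ => h1 l
    have h5 := cobd_eq_zero t (fun l => φ (a :: a :: l)) fun l _ => h2 l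
    simp only [List.nil_append, _root_.cobd]
    refine ⟨?_, ?_⟩
    · linear_combination h4 - h3
    · linear_combination h5
  | cons x s ih =>
    obtain ⟨h1, h2⟩ := ih (h.cons x)
    obtain ⟨h3, h4⟩ := h s t a b
    simp only [List.cons_append, _root_.cobd]
    refine ⟨?_, ?_⟩
    · linear_combination h3 - h1
    · linear_combination h4 - h2

lemma IsAlt.apply_append_eq_zero {φ : List L → R} (h : IsAlt φ) (x : L) (u s t : List L) :
    φ (u ++ x :: (s ++ x :: t)) = 0 := by
  induction s generalizing u with
  | nil => exact (h u t x x).2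
  | cons y s ih =>
    have h1 := (h u (s ++ x :: t) x y).1
    have h2 := ih (u ++ [y])
    simp only [List.append_assoc, List.cons_append, List.nil_append] at h1 h2 ⊢
    linear_combination h1 - h2

lemma IsAlt.eq_zero_of_not_nodup {φ : List L → R} (h : IsAlt φ) {l : List L} (hl : ¬ l.Nodup) :
    φ l = 0 := by
  induction l generalizing φ with
  | nil => simp at hl
  | cons x l ih =>
    by_cases hx : x ∈ l
    · obtain ⟨s, t, rfl⟩ := List.append_of_mem hx
      exact h.apply_append_eq_zero x [] s t
    · exact ih (h.cons x) fun hn => hl (List.nodup_cons.2 ⟨hx, hn⟩)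

lemma IsAlt.smul_of_perm {φ : List L → R} (h : IsAlt φ) {ρ : List L → R}
    (hρ : ∀ l l', l.Perm l' → ρ l = ρ l') : IsAlt fun l => ρ l * φ l := by
  intro s t a b
  have e : ρ (s ++ b :: a :: t) = ρ (s ++ a :: b :: t) :=
    hρ _ _ ((List.Perm.swap _ _ _).append_left s)
  obtain ⟨h1, h2⟩ := h s t a b
  refine ⟨?_, by simp [h2]⟩
  simp only [e, ← mul_add, h1, mul_zero]

lemma IsAlt.map {φ : List L → R} (h : IsAlt φ) (f : L → L) : IsAlt fun l => φ (l.map f) := by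
  intro s t a b
  simpa using h (s.map f) (t.map f) (f a) (f b)

/-- A homotopy inverting the alternator on tuples on which the index function `r` is
equivariant. -/
def resolve (p : ℕ) [NeZero p] (sh : L → L) (r : List L → ZMod p) (k : ℕ) (φ : List L → R) :
    List L → R := fun l =>
  if Even k then -∑ i ∈ range p, if i < p - (r l).val then φ (l.map sh^[i]) else 0
  else if r l = 0 then φ l else 0

lemma IsAlt.resolve {p : ℕ} [NeZero p] {sh : L → L} {r : List L → ZMod p}
    (hr : ∀ l l', l.Perm l' → r l = r l') (k : ℕ) {φ : List L → R} (h : IsAlt φ) :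
    IsAlt (resolve p sh r k φ) := by
  by_cases hk : Even k
  · have hi : ∀ i, IsAlt fun l => (if i < p - (r l).val then (1 : R) else 0) * φ (l.map sh^[i]) :=
      fun i => (h.map _).smul_of_perm fun l l' hl => by rw [hr l l' hl]
    intro s t a b
    have e : ∀ l, _root_.resolve p sh r k φ l =
        -∑ i ∈ range p, (if i < p - (r l).val then (1 : R) else 0) * φ (l.map sh^[i]) := by
      intro l
      simp [_root_.resolve, hk]
    simp only [e]
    refine ⟨?_, ?_⟩
    · rw [← neg_add, ← sum_add_distrib, sum_eq_zero fun i _ => (hi i s t a b).1, neg_zero]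
    · rw [sum_eq_zero fun i _ => (hi i s t a b).2, neg_zero]
  · have := h.smul_of_perm (ρ := fun l => if r l = 0 then 1 else 0)
      fun l l' hl => by rw [hr l l' hl]
    convert this using 2 with l
    simp [_root_.resolve, hk]

lemma alternator_resolve {p : ℕ} [NeZero p] {sh : L → L} (hsh : sh^[p] = id)
    {r : List L → ZMod p} {Y : List L → Prop} (hYsh : ∀ l, Y l → Y (l.map sh))
    (hr : ∀ l, Y l → r (l.map sh) = r l + 1) (k : ℕ) {φ : List L → R}
    (hφ : ∀ l, Y l → alternator R p sh (k + 1) φ l = 0) (l : List L) (hl : Y l) :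
    alternator R p sh k (resolve p sh r k φ) l = φ l := by
  have hp : 0 < p := Nat.pos_of_ne_zero (NeZero.ne p)
  by_cases hk : Even k
  · have hk' : ¬ Even (k + 1) := by simpa [Nat.even_add_one] using hk
    have hs : ∑ i ∈ range p, φ (l.map sh^[i]) = 0 := by
      rw [← alternator_odd p sh hk']; exact hφ l hl
    have e : ∀ l, resolve p sh r k φ l = -∑ i ∈ range (p - (r l).val), φ (l.map sh^[i]) := by
      intro l
      simp only [resolve, hk, if_true]
      rw [← sum_filter]
      congr 2
      ext i
      simp only [mem_filter, mem_range]
      omega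
    have em : ∀ i, (l.map sh).map sh^[i] = l.map sh^[i + 1] := by
      intro i; rw [List.map_map, Function.iterate_succ]
    rw [alternator_even p sh hk, e, e, hr l hl]
    simp only [em]
    have hv := ZMod.val_lt (r l)
    by_cases h1 : (r l).val + 1 < p
    · have : (r l + 1).val = (r l).val + 1 := by
        have : Fact (1 < p) := ⟨by omega⟩
        rw [ZMod.val_add_of_lt] <;> rw [ZMod.val_one]
        exact h1
      rw [this, show p - (r l).val = (p - ((r l).val + 1)) + 1 by omega, sum_range_succ']
      simp
    · have h2 : (r l).val + 1 = p := by omega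
      have h3 : r l + 1 = 0 := by
        have := congrArg (Nat.cast : ℕ → ZMod p) h2
        simpa using this
      rw [h3, ZMod.val_zero, show p - (r l).val = 1 by omega, Nat.sub_zero]
      have h4 := sum_range_succ' (fun i => φ (l.map sh^[i])) p
      rw [sum_range_succ, hs, hsh] at h4
      simp at h4 ⊢
      rw [← h4]
  · have hk' : Even (k + 1) := by simpa [Nat.even_add_one] using hk
    have hinv : ∀ l, Y l → φ (l.map sh) = φ l := by
      intro l hl
      have := hφ l hl
      rwa [alternator_even p sh hk', sub_eq_zero] at this
    have hiter : ∀ i, Y (l.map sh^[i]) ∧ φ (l.map sh^[i]) = φ l ∧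
        r (l.map sh^[i]) = r l + i := by
      intro i
      induction i with
      | zero => simpa using hl
      | succ i ih =>
        rw [Function.iterate_succ', ← List.map_map]
        exact ⟨hYsh _ ih.1, by rw [hinv _ ih.1, ih.2.1],
          by rw [hr _ ih.1, ih.2.2]; push_cast; ring⟩
    rw [alternator_odd p sh hk]
    simp only [resolve, hk, if_false, (hiter _).2.1, (hiter _).2.2]
    rw [sum_eq_single (-(r l)).val]
    · simp
    · intro i hi hne
      rw [if_neg]
      intro h0
      apply hne
      rw [← eq_neg_of_add_eq_zero_right h0, ZMod.val_natCast, Nat.mod_eq_of_lt (mem_range.1 hi)]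
    · intro h
      exact absurd (mem_range.2 (ZMod.val_lt _)) h

/-- The potentials of the obstruction cocycles: `cobdHom (potential k)` is the `k`-th obstruction
cocycle. -/
def potential (R : Type*) [CommRing R] (p : ℕ) [NeZero p] (sh : L → L) (r : List L → ZMod p) :
    ℕ → List L → R
  | 0 => fun l => if l = [] then 1 else 0
  | k + 1 => resolve p sh r k (cobdHom L R (potential R p sh r k))

lemma isAlt_potential {p : ℕ} [NeZero p] {sh : L → L} {r : List L → ZMod p}
    (hr : ∀ l l', l.Perm l' → r l = r l') (k : ℕ) : IsAlt (potential R p sh r k) := by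
  induction k with
  | zero => intro s t a b; simp [potential]
  | succ k ih => exact ih.cobd.resolve hr k

end LabelCochains

section Obstruction

variable {V L R : Type*} [CommRing R]

lemma alternator_cobdHom_potential {p : ℕ} [NeZero p] [CharP R p] {sh : L → L}
    (hsh : sh^[p] = id) {r : List L → ZMod p} {Y : List L → Prop}
    (hYsh : ∀ l, Y l → Y (l.map sh))
    (hYsub : ∀ l l' : List L, Y l → l'.Sublist l → l' ≠ [] → Y l')
    (hr : ∀ l, Y l → r (l.map sh) = r l + 1) (k : ℕ) (l : List L) (hl : Y l) :
    alternator R p sh (k + 1) (cobdHom L R (potential R p sh r k)) l = 0 := by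
  induction k generalizing l with
  | zero =>
    have h : alternator R p sh 1 (potential R p sh r 0) = 0 := by
      funext l
      simp [alternator_odd, potential]
    rw [alternator_cobdHom, zero_add, h, map_zero, Pi.zero_apply]
  | succ k ih =>
    have e : alternator R p sh (k + 1 + 1) = alternator R p sh k := by
      simp [alternator, Nat.even_add]
    rw [e, alternator_cobdHom]
    set c := cobdHom L R (potential R p sh r k) with hc
    have hagree : ∀ l', l'.Sublist l →
        (alternator R p sh k (resolve p sh r k c) - c) l' = 0 := by
      intro l' hl'
      rcases eq_or_ne l' [] with rfl | hne
      · simp [alternator_nil, hc, cobd]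
      · rw [Pi.sub_apply,
          alternator_resolve hsh hYsh hr k (fun l hl => ih l hl) l' (hYsub l l' hl hl' hne), sub_self]
    have h1 : cobdHom L R (alternator R p sh k (resolve p sh r k c) - c) l = 0 :=
      cobd_eq_zero _ _ hagree
    rw [map_sub, hc, cobdHom_cobdHom, sub_zero] at h1
    exact h1

theorem obstruction {p : ℕ} [NeZero p] [CharP R p] [Nontrivial R]
    {g : V → V} (hg : g^[p] = id) {O : ℕ → V → V} {K : ℕ} (v₀ : V) (h0 : O 0 = id)
    (hK : ∀ v w, O K v = O K w) {Good : ℕ → List V → Prop} (good0 : Good 0 [v₀])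
    (goodg : ∀ k l, Good k l → Good k (l.map g))
    (goodO : ∀ k l, Good k l → ∀ i < K, ∀ l' : List V, l'.length = l.length + 1 →
      (∀ x ∈ l', ∃ v ∈ l, x = O (i + 1) v ∨ x = O i v) → Good (k + 1) l')
    (goodlen : ∀ k l, Good k l → l.length = k + 1)
    {sh : L → L} (hsh : sh^[p] = id) {lab : V → L} (hlab : ∀ v, lab (g v) = sh (lab v))
    {r : List L → ZMod p} (hrperm : ∀ l l', l.Perm l' → r l = r l') {Y : List L → Prop}
    (hYsh : ∀ l, Y l → Y (l.map sh))
    (hYsub : ∀ l l' : List L, Y l → l'.Sublist l → l' ≠ [] → Y l')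
    (hr : ∀ l, Y l → r (l.map sh) = r l + 1) (N : ℕ)
    (hY : ∀ k ≤ N, ∀ l, Good k l → Y (l.map lab))
    (hN : ∀ l, Y l → l.length = N + 1 → ¬ l.Nodup) : False := by
  have key : ∀ k ≤ N, evalChain R p g O K v₀ k
      (pull R lab (cobdHom L R (potential R p sh r k))) = 1 := by
    intro k hk
    induction k with
    | zero => simp [evalChain_zero, cobd, potential]
    | succ k ih =>
      rw [← cobdHom_pull, evalChain_cobdHom hg v₀ h0 hK, alternator_pull hlab, potential,
        ← ih (by omega), ← sub_eq_zero, ← map_sub]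
      refine evalChain_eq_zero good0 goodg goodO k _ fun l hl => ?_
      rw [Pi.sub_apply, pull_apply, pull_apply, sub_eq_zero]
      exact alternator_resolve hsh hYsh hr k
        (alternator_cobdHom_potential hsh hYsh hYsub hr k) _ (hY k (by omega) l hl)
  have hzero : evalChain R p g O K v₀ N
      (pull R lab (cobdHom L R (potential R p sh r N))) = 0 := by
    refine evalChain_eq_zero good0 goodg goodO N _ fun l hl => ?_
    refine (isAlt_potential hrperm N).cobd.eq_zero_of_not_nodup (hN _ (hY N le_rfl l hl) ?_)
    rw [List.length_map, goodlen N l hl]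
  exact one_ne_zero ((key N le_rfl).symm.trans hzero)

end Obstruction

section Index

lemma exists_equivariant_index {p m : ℕ} [Fact p.Prime] :
    ∃ r : Finset (Fin m × ZMod p) → ZMod p, ∀ S : Finset (Fin m × ZMod p), S.Nonempty →
      (∀ j, ∃ t, (j, t) ∉ S) → r (S.image fun x => (x.1, x.2 + 1)) = r S + 1 := by
  let col (S : Finset (Fin m × ZMod p)) (j : Fin m) : Finset (ZMod p) :=
    univ.filter fun t => (j, t) ∈ S
  let avg (T : Finset (ZMod p)) : ZMod p := (∑ t ∈ T, t) / (T.card : ZMod p)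
  refine ⟨fun S => if h : (S.image Prod.fst).Nonempty then
    avg (col S ((S.image Prod.fst).min' h)) else 0, fun S hS hfull => ?_⟩
  have e : (S.image fun x => (x.1, x.2 + 1)).image Prod.fst = S.image Prod.fst := by
    rw [image_image]; rfl
  have hS' : (S.image Prod.fst).Nonempty := hS.image _
  simp only [e, hS', dif_pos]
  set j := (S.image Prod.fst).min' hS' with hj
  have hmem : j ∈ S.image Prod.fst := min'_mem _ _
  have hcol : col (S.image fun x => (x.1, x.2 + 1)) j = (col S j).image (· + 1) := by
    ext t
    simp only [col, mem_filter, mem_univ, true_and, mem_image, Prod.exists, Prod.mk.injEq]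
    constructor
    · rintro ⟨a, b, h, rfl, rfl⟩; exact ⟨b, h, rfl⟩
    · rintro ⟨b, h, rfl⟩; exact ⟨j, b, h, rfl, rfl⟩
  have hinj : Function.Injective fun t : ZMod p => t + 1 := add_left_injective 1
  have hlt : (col S j).card < p := by
    obtain ⟨t, ht⟩ := hfull j
    have : (col S j).card < (univ : Finset (ZMod p)).card := by
      refine card_lt_card ((ssubset_univ_iff).2 fun h => ht ?_)
      have := h ▸ mem_univ t
      simpa [col] using this
    simpa [ZMod.card] using this
  have hpos : 0 < (col S j).card := by
    obtain ⟨⟨a, t⟩, hx, hxj⟩ := mem_image.1 hmem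
    refine card_pos.2 ⟨t, ?_⟩
    simp only at hxj
    simpa [col, ← hxj] using hx
  have hne : ((col S j).card : ZMod p) ≠ 0 := by
    rw [Ne, ZMod.natCast_eq_zero_iff]
    exact Nat.not_dvd_of_pos_of_lt hpos hlt
  simp only [avg]
  rw [hcol, card_image_of_injective _ hinj, sum_image hinj.injOn, sum_add_distrib]
  simp only [sum_const, nsmul_eq_mul, mul_one]
  field_simp

lemma length_le_of_nodup {p m : ℕ} [NeZero p] {l : List (Fin m × ZMod p)}
    (hfull : ∀ j, ∃ t, (j, t) ∉ l) (hl : l.Nodup) : l.length ≤ (p - 1) * m := by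
  choose t ht using hfull
  have hinj : Function.Injective fun j => (j, t j) := fun a b h => (Prod.mk.inj h).1
  have hd : Disjoint l.toFinset (univ.image fun j => (j, t j)) := by
    rw [Finset.disjoint_right]
    rintro x hx
    obtain ⟨j, -, rfl⟩ := mem_image.1 hx
    simpa using ht j
  have h1 := card_le_univ (l.toFinset ∪ univ.image fun j => (j, t j))
  rw [card_union_of_disjoint hd, List.toFinset_card_of_nodup hl, card_image_of_injective _ hinj,
    Fintype.card_prod, ZMod.card, card_univ, Fintype.card_fin] at h1
  have : (p - 1) * m + m = m * p := by
    obtain ⟨k, hk⟩ := Nat.exists_eq_succ_of_ne_zero (NeZero.ne p)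
    rw [hk]; simp; ring
  omega

end Index

section Splitting

/-- The positions before `n` at which the assignment `f` changes. -/
def cuts {T : Type*} [DecidableEq T] (n : ℕ) (f : ℕ → T) : Finset ℕ :=
  (range n).filter fun i => i + 1 < n ∧ f i ≠ f (i + 1)

/-- The beads before `n` of color `j` that `f` assigns to the thief `t`. -/
def share {T : Type*} [DecidableEq T] {m : ℕ} (n : ℕ) (c : ℕ → Fin m) (f : ℕ → T) (j : Fin m)
    (t : T) : Finset ℕ :=
  (range n).filter fun i => c i = j ∧ f i = t

/-- Necklaces with `m` colors can be split among the thieves `T` with `(|T| - 1) m` cuts, up to an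
error that does not depend on the length of the necklace. -/
def ApproxSplit (m : ℕ) (T : Type*) [DecidableEq T] [Fintype T] : Prop :=
  ∃ C : ℕ, ∀ (n : ℕ) (c : ℕ → Fin m), ∃ f : ℕ → T,
    (cuts n f).card ≤ (Fintype.card T - 1) * m ∧
    ∀ j t, Fintype.card T * (share n c f j t).card ≤
      ((range n).filter fun i => c i = j).card + C

lemma sum_card_share {T : Type*} [DecidableEq T] [Fintype T] {m : ℕ} (n : ℕ) (c : ℕ → Fin m)
    (f : ℕ → T) (j : Fin m) :
    ∑ t, (share n c f j t).card = ((range n).filter fun i => c i = j).card := by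
  rw [card_eq_sum_card_fiberwise (f := f) (t := univ) fun _ _ => mem_univ _]
  simp only [share, filter_filter]

lemma approxSplit_zmod (m p : ℕ) [Fact p.Prime] : ApproxSplit m (ZMod p) := by
  set N := (p - 1) * m with hN
  refine ⟨p * N, fun n c => ?_⟩
  rw [ZMod.card]
  by_contra! hcon
  obtain ⟨r, hr⟩ := exists_equivariant_index (p := p) (m := m)
  let V := ℕ → ZMod p
  let g : V → V := fun v x => v x + 1
  let O : ℕ → V → V := fun i v x => if x < i ∨ n < i then 0 else v x
  let A (j : Fin m) : ℕ := ((range n).filter fun i => c i = j).card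
  let diff (v w : V) : Finset ℕ := (range n).filter fun i => v i ≠ w i
  have hgi : ∀ i (v : V) x, (g^[i] v) x = v x + i := by
    intro i v x
    induction i with
    | zero => simp
    | succ i ih => rw [Function.iterate_succ', Function.comp_apply]; simp [g, ih]; ring
  have hcutsg : ∀ v : V, cuts n (g v) = cuts n v := by intro v; simp [cuts, g]
  have hcuts0 : cuts n (0 : V) = ∅ := filter_eq_empty_iff.2 fun x _ h => h.2 rfl
  have hex : ∀ v : V, ∃ x : Fin m × ZMod p, (cuts n v).card ≤ N →
      A x.1 + p * N < p * (share n c v x.1 x.2).card := by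
    intro v
    by_cases hv : (cuts n v).card ≤ N
    · obtain ⟨j, t, h⟩ := hcon v hv
      exact ⟨(j, t), fun _ => h⟩
    · have : (cuts n (0 : V)).card ≤ N := by simp [hcuts0]
      obtain ⟨j, t, h⟩ := hcon 0 this
      exact ⟨(j, t), fun h => absurd h hv⟩
  choose pick hpick using hex
  let norm (v : V) : V := fun x => v x - v 0
  let lab (v : V) : Fin m × ZMod p := ((pick (norm v)).1, (pick (norm v)).2 + v 0)
  let sh : Fin m × ZMod p → Fin m × ZMod p := fun x => (x.1, x.2 + 1)
  have hnormg : ∀ v, norm (g v) = norm v := by intro v; funext x; simp [norm, g]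
  have hlabg : ∀ v, lab (g v) = sh (lab v) := by
    intro v
    simp only [lab, hnormg, sh]
    simp [g, add_assoc]
  have hlab : ∀ v : V, (cuts n v).card ≤ N →
      A (lab v).1 + p * N < p * (share n c v (lab v).1 (lab v).2).card := by
    intro v hv
    have h1 : cuts n (norm v) = cuts n v := by simp [cuts, norm]
    have h2 : share n c (norm v) (lab v).1 (pick (norm v)).2 =
        share n c v (lab v).1 (lab v).2 := by
      simp [share, norm, lab, sub_eq_iff_eq_add]
    rw [← h2]
    exact hpick _ (h1 ▸ hv)
  have hOx : ∀ i v x, x < n → O i v x = if x < i then 0 else v x := by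
    intro i v x hx
    simp only [O]
    congr 1
    simp only [eq_iff_iff]
    omega
  have hOcuts : ∀ i (v : V), (cuts n (O i v)).card ≤ (cuts n v).card + 1 := by
    intro i v
    refine (card_le_card (t := insert (i - 1) (cuts n v)) ?_).trans (card_insert_le _ _)
    intro x hx
    simp only [cuts, mem_filter, mem_range, mem_insert] at hx ⊢
    obtain ⟨h1, h2, h3⟩ := hx
    rw [hOx i v x h1, hOx i v _ h2] at h3
    by_cases h4 : x = i - 1
    · exact Or.inl h4
    · right
      refine ⟨h1, h2, ?_⟩
      split_ifs at h3 with h5 h6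
      · simp at h3
      · omega
      · omega
      · exact h3
  have hOdiff : ∀ i i' k (v w : V), (∀ x, x < i → x < i' ∨ x = k) → (∀ x, x < i' → x < i ∨ x = k) →
      (diff (O i v) (O i' w)).card ≤ (diff v w).card + 1 := by
    intro i i' k v w h1 h2
    refine (card_le_card (t := insert k (diff v w)) ?_).trans (card_insert_le _ _)
    intro x hx
    simp only [diff, mem_filter, mem_range, mem_insert] at hx ⊢
    obtain ⟨hxn, hx⟩ := hx
    rw [hOx _ _ _ hxn, hOx _ _ _ hxn] at hx
    by_cases hk : x = k
    · exact Or.inl hk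
    · refine Or.inr ⟨hxn, ?_⟩
      have := h1 x
      have := h2 x
      split_ifs at hx with h5 h6 h6
      · simp at hx
      · omega
      · omega
      · exact hx
  let Good (k : ℕ) (l : List V) : Prop :=
    l.length = k + 1 ∧ (∀ v ∈ l, (cuts n v).card ≤ k) ∧ ∀ v ∈ l, ∀ w ∈ l, (diff v w).card ≤ k
  let Y (l : List (Fin m × ZMod p)) : Prop := l ≠ [] ∧ ∀ j, ∃ t, (j, t) ∉ l
  have hshN : sh^[p] = id := by
    have : ∀ i (x : Fin m × ZMod p), sh^[i] x = (x.1, x.2 + i) := by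
      intro i x
      induction i with
      | zero => simp
      | succ i ih => rw [Function.iterate_succ', Function.comp_apply, ih]; simp [sh, add_assoc]
    funext x
    simp [this]
  refine obstruction (R := ZMod p) (p := p) (g := g) (O := O) (K := n + 1) (v₀ := 0)
    (Good := Good) (sh := sh) (lab := lab) (r := fun l => r l.toFinset) (Y := Y) (N := N)
    ?_ ?_ ?_ ?_ ?_ ?_ (fun k l h => h.1) hshN hlabg ?_ ?_ ?_ ?_ ?_ ?_
  · funext v x; simp [hgi]
  · funext v x; simp [O]
  · intro v w; funext x; simp [O]
  · simp [Good, hcuts0, diff]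
  · rintro k l ⟨h1, h2, h3⟩
    refine ⟨by simpa using h1, ?_, ?_⟩
    · intro v hv
      obtain ⟨w, hw, rfl⟩ := List.mem_map.1 hv
      rw [hcutsg]; exact h2 w hw
    · intro v hv w hw
      obtain ⟨v', hv', rfl⟩ := List.mem_map.1 hv
      obtain ⟨w', hw', rfl⟩ := List.mem_map.1 hw
      simpa [diff, g] using h3 v' hv' w' hw'
  · rintro k l ⟨h1, h2, h3⟩ i hi l' hl' hm
    refine ⟨by omega, ?_, ?_⟩
    · intro v hv
      obtain ⟨u, hu, rfl | rfl⟩ := hm v hv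
      · exact (hOcuts _ _).trans (Nat.succ_le_succ (h2 u hu))
      · exact (hOcuts _ _).trans (Nat.succ_le_succ (h2 u hu))
    · intro v hv w hw
      obtain ⟨u, hu, rfl | rfl⟩ := hm v hv <;> obtain ⟨u', hu', rfl | rfl⟩ := hm w hw <;>
      exact (hOdiff _ _ i _ _ (by omega) (by omega)).trans (Nat.succ_le_succ (h3 u hu u' hu'))
  · intro l l' h
    simp only [List.toFinset_eq_of_perm _ _ h]
  · rintro l ⟨h1, h2⟩
    refine ⟨by simpa using h1, fun j => ?_⟩
    obtain ⟨t, ht⟩ := h2 j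
    refine ⟨t + 1, fun h => ht ?_⟩
    obtain ⟨⟨a, b⟩, hx, hx'⟩ := List.mem_map.1 h
    simp only [sh, Prod.mk.injEq, add_left_inj] at hx'
    rw [← hx'.1, ← hx'.2]; exact hx
  · rintro l l' ⟨h1, h2⟩ hs hne
    exact ⟨hne, fun j => (h2 j).imp fun t ht h => ht (hs.subset h)⟩
  · rintro l ⟨h1, h2⟩
    have e : (l.map sh).toFinset = l.toFinset.image sh := by ext x; simp
    simp only [e]
    refine hr _ (by simpa using h1) fun j => ?_
    obtain ⟨t, ht⟩ := h2 j
    exact ⟨t, by simpa using ht⟩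
  · rintro k hk l ⟨h1, h2, h3⟩
    have hl : l ≠ [] := by rintro rfl; simp at h1
    refine ⟨by simpa using hl, fun j => ?_⟩
    by_contra! hall
    obtain ⟨u, hu⟩ := List.exists_mem_of_ne_nil l hl
    have hbig : ∀ t ∈ (univ : Finset (ZMod p)), A j < p * (share n c u j t).card := by
      intro t _
      obtain ⟨v, hv, hvt⟩ := List.mem_map.1 (hall t)
      have h4 := hlab v ((h2 v hv).trans hk)
      rw [hvt] at h4
      have h5 : (share n c v j t).card ≤ (share n c u j t).card + N := by
        have : share n c v j t ⊆ share n c u j t ∪ diff v u := by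
          intro x hx
          simp only [share, diff, mem_filter, mem_range, mem_union] at hx ⊢
          by_cases hxu : u x = t
          · exact Or.inl ⟨hx.1, hx.2.1, hxu⟩
          · exact Or.inr ⟨hx.1, fun h => hxu (h ▸ hx.2.2)⟩
        exact (card_le_card this).trans ((card_union_le _ _).trans
          (Nat.add_le_add_left ((h3 v hv u hu).trans hk) _))
      have h6 := Nat.mul_le_mul_left p h5
      rw [mul_add] at h6
      simp only at h4
      omega
    have h7 := sum_lt_sum_of_nonempty univ_nonempty hbig
    rw [← mul_sum, sum_card_share, sum_const, card_univ, ZMod.card, smul_eq_mul] at h7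
    exact lt_irrefl _ h7
  · rintro l ⟨h1, h2⟩ hlen hnd
    have := length_le_of_nodup h2 hnd
    omega

end Splitting

section Composite

lemma ApproxSplit.congr {m : ℕ} {T T' : Type*} [DecidableEq T] [Fintype T] [DecidableEq T']
    [Fintype T'] (e : T ≃ T') (h : ApproxSplit m T) : ApproxSplit m T' := by
  obtain ⟨C, hC⟩ := h
  refine ⟨C, fun n c => ?_⟩
  obtain ⟨f, h1, h2⟩ := hC n c
  have hcard := Fintype.card_congr e
  refine ⟨fun i => e (f i), ?_, fun j t => ?_⟩
  · simpa [cuts, ← hcard] using h1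
  · have : share n c (fun i => e (f i)) j t = share n c f j (e.symm t) := by
      simp [share, Equiv.eq_symm_apply]
    rw [this, ← hcard]
    exact h2 j _

lemma approxSplit_unique (m : ℕ) (T : Type*) [DecidableEq T] [Fintype T] [Unique T] :
    ApproxSplit m T := by
  refine ⟨0, fun n c => ⟨fun _ => default, by simp [cuts], fun j t => ?_⟩⟩
  simp [share, Unique.eq_default t]

lemma ApproxSplit.prod {m : ℕ} {T₁ T₂ : Type*} [DecidableEq T₁] [Fintype T₁] [Nonempty T₁]
    [DecidableEq T₂] [Fintype T₂] [Nonempty T₂] (h₁ : ApproxSplit m T₁) (h₂ : ApproxSplit m T₂) :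
    ApproxSplit m (T₁ × T₂) := by
  obtain ⟨C₁, hC₁⟩ := h₁
  obtain ⟨C₂, hC₂⟩ := h₂
  refine ⟨C₁ + Fintype.card T₁ * C₂, fun n c => ?_⟩
  obtain ⟨f₁, hcut₁, hsh₁⟩ := hC₁ n c
  choose g hcut₂ hsh₂ using fun t : T₁ =>
    hC₂ (Nat.count (fun i => f₁ i = t) n) fun k => c (Nat.nth (fun i => f₁ i = t) k)
  refine ⟨fun i => (f₁ i, g (f₁ i) (Nat.count (fun x => f₁ x = f₁ i) i)), ?_, ?_⟩
  · set f : ℕ → T₁ × T₂ := fun i => (f₁ i, g (f₁ i) (Nat.count (fun x => f₁ x = f₁ i) i)) with hf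
    let inner (t : T₁) : Finset ℕ := (range n).filter fun i => f₁ i = t ∧
      Nat.count (fun x => f₁ x = t) i ∈ cuts (Nat.count (fun x => f₁ x = t) n) (g t)
    have hsub : cuts n f ⊆ cuts n f₁ ∪ univ.biUnion inner := by
      intro i hi
      simp only [cuts, mem_filter, mem_range] at hi
      obtain ⟨hin, hin', hne⟩ := hi
      rw [mem_union, mem_biUnion]
      by_cases h : f₁ i = f₁ (i + 1)
      · right
        refine ⟨f₁ i, mem_univ _, ?_⟩
        have hlt : Nat.count (fun x => f₁ x = f₁ i) i < Nat.count (fun x => f₁ x = f₁ i) n :=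
          Nat.count_strict_mono rfl hin
        have hlt' : Nat.count (fun x => f₁ x = f₁ i) (i + 1) <
            Nat.count (fun x => f₁ x = f₁ i) n := Nat.count_strict_mono h.symm hin'
        have hs : Nat.count (fun x => f₁ x = f₁ i) (i + 1) =
            Nat.count (fun x => f₁ x = f₁ i) i + 1 := by simp [Nat.count_succ]
        simp only [inner, cuts, mem_filter, mem_range]
        refine ⟨hin, trivial, hlt, hs ▸ hlt', fun h' => hne ?_⟩
        simp only [hf, ← h, hs, h']
      · left
        simp only [cuts, mem_filter, mem_range]
        exact ⟨hin, hin', h⟩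
    have hinner : ∀ t, (inner t).card ≤ (Fintype.card T₂ - 1) * m := by
      intro t
      refine le_trans ?_ (hcut₂ t)
      refine card_le_card_of_injOn (Nat.count fun x => f₁ x = t) ?_ ?_
      · intro i hi
        simp only [inner, coe_filter, Set.mem_ofPred_eq] at hi
        exact hi.2.2
      · intro i hi i' hi' h
        simp only [inner, coe_filter, Set.mem_ofPred_eq] at hi hi'
        exact Nat.count_injective hi.2.1 hi'.2.1 h
    have h1 := (card_le_card hsub).trans (card_union_le _ _)
    have h2 := card_biUnion_le_card_mul univ inner _ fun t _ => hinner t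
    rw [card_univ] at h2
    rw [Fintype.card_prod]
    obtain ⟨a, ha⟩ := Nat.exists_eq_succ_of_ne_zero (Fintype.card_ne_zero (α := T₁))
    obtain ⟨b, hb⟩ := Nat.exists_eq_succ_of_ne_zero (Fintype.card_ne_zero (α := T₂))
    rw [ha] at hcut₁ h2 ⊢
    rw [hb] at h2 ⊢
    have e : (a.succ * b.succ - 1) * m = a * m + a.succ * (b * m) := by
      have : a.succ * b.succ - 1 = a + a.succ * b := by
        rw [Nat.mul_succ]; omega
      rw [this]; ring
    simp only [Nat.succ_sub_one] at hcut₁ h2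
    omega
  · rintro j ⟨t, s⟩
    have h1 := hsh₁ j t
    have h2 := hsh₂ t j s
    have h3 : (share n c (fun i => (f₁ i, g (f₁ i) (Nat.count (fun x => f₁ x = f₁ i) i))) j
        (t, s)).card ≤ (share (Nat.count (fun i => f₁ i = t) n)
          (fun k => c (Nat.nth (fun i => f₁ i = t) k)) (g t) j s).card := by
      refine card_le_card_of_injOn (Nat.count fun x => f₁ x = t) ?_ ?_
      · intro i hi
        simp only [share, coe_filter, mem_range, Set.mem_ofPred_eq, Prod.mk.injEq] at hi ⊢
        obtain ⟨hin, hc, rfl, hg⟩ := hi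
        refine ⟨Nat.count_strict_mono rfl hin, ?_, hg⟩
        rw [Nat.nth_count (p := fun x => f₁ x = f₁ i) rfl, hc]
      · intro i hi i' hi' h
        simp only [share, coe_filter, mem_range, Set.mem_ofPred_eq, Prod.mk.injEq] at hi hi'
        exact Nat.count_injective hi.2.2.1 hi'.2.2.1 h
    have h4 : ((range (Nat.count (fun i => f₁ i = t) n)).filter
        fun k => c (Nat.nth (fun i => f₁ i = t) k) = j).card ≤ (share n c f₁ j t).card := by
      have hlt : ∀ k, k < Nat.count (fun i => f₁ i = t) n →
          ∀ hf : (Set.ofPred fun i => f₁ i = t).Finite, k < hf.toFinset.card := fun k hk hf =>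
        hk.trans_le (Nat.count_le_card hf n)
      refine card_le_card_of_injOn (Nat.nth fun x => f₁ x = t) ?_ ?_
      · intro k hk
        simp only [share, coe_filter, mem_range, Set.mem_ofPred_eq] at hk ⊢
        exact ⟨Nat.nth_lt_of_lt_count hk.1, hk.2, Nat.nth_mem k (hlt k hk.1)⟩
      · intro k hk k' hk' h
        simp only [coe_filter, mem_range, Set.mem_ofPred_eq] at hk hk'
        rw [← Nat.count_nth (hlt k hk.1), h, Nat.count_nth (hlt k' hk'.1)]
    rw [Fintype.card_prod]
    have h5 : Fintype.card T₁ * (Fintype.card T₂ * (share n c (fun i =>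
        (f₁ i, g (f₁ i) (Nat.count (fun x => f₁ x = f₁ i) i))) j (t, s)).card) ≤
        Fintype.card T₁ * ((share n c f₁ j t).card + C₂) :=
      Nat.mul_le_mul_left _ ((Nat.mul_le_mul_left _ h3).trans (h2.trans (by omega)))
    rw [mul_add, ← mul_assoc] at h5
    omega

theorem approxSplit_fin (m q : ℕ) (hq : 0 < q) : ApproxSplit m (Fin q) := by
  induction q using Nat.recOnMul with
  | zero => omega
  | one => exact approxSplit_unique m (Fin 1)
  | prime p hp =>
    have : Fact p.Prime := ⟨hp⟩
    exact (approxSplit_zmod m p).congr (ZMod.finEquiv p).toEquiv.symm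
  | mul a b iha ihb =>
    have ha : 0 < a := Nat.pos_of_mul_pos_right hq
    have hb : 0 < b := Nat.pos_of_mul_pos_left hq
    have : NeZero a := ⟨ha.ne'⟩
    have : NeZero b := ⟨hb.ne'⟩
    exact ((iha ha).prod (ihb hb)).congr finProdFinEquiv

end Composite

section Rounding

/-- Beads `B` can be handed out to thieves, each bead `b` to a thief in `A b`, so that each thief
`t` receives exactly `d t` beads, provided the total demand is `|B|` and Hall's condition holds. -/
lemma exists_assignment {q : ℕ} (hq : 0 < q) (B : Finset ℕ) (A : ℕ → Finset (Fin q)) (d : Fin q → ℕ)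
    (hd : ∑ t, d t = B.card)
    (hall : ∀ S : Finset (Fin q),
      ∑ t ∈ S, d t ≤ (B.filter fun b => ∃ t ∈ S, t ∈ A b).card) :
    ∃ F : ℕ → Fin q, (∀ b ∈ B, F b ∈ A b) ∧ ∀ t, (B.filter fun b => F b = t).card = d t := by
  let N (x : Σ t, Fin (d t)) : Finset ℕ := B.filter fun b => x.1 ∈ A b
  have hN : ∀ X : Finset (Σ t, Fin (d t)), X.card ≤ (X.biUnion N).card := by
    intro X
    have h1 : X ⊆ (X.image Sigma.fst).sigma fun _ => univ := by
      intro x hx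
      simp only [mem_sigma, mem_univ, and_true]
      exact mem_image_of_mem _ hx
    have h2 := card_le_card h1
    rw [card_sigma] at h2
    simp only [card_univ, Fintype.card_fin] at h2
    refine (h2.trans (hall _)).trans (card_le_card ?_)
    intro b hb
    obtain ⟨hb, t, ht, htb⟩ := mem_filter.1 hb
    obtain ⟨x, hx, rfl⟩ := mem_image.1 ht
    exact mem_biUnion.2 ⟨x, hx, mem_filter.2 ⟨hb, htb⟩⟩
  obtain ⟨e, he, heN⟩ := (all_card_le_biUnion_card_iff_exists_injective N).1 hN
  have heB : ∀ x, e x ∈ B ∧ x.1 ∈ A (e x) := fun x => mem_filter.1 (heN x)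
  have himg : univ.image e = B := by
    refine eq_of_subset_of_card_le (image_subset_iff.2 fun x _ => (heB x).1) ?_
    rw [card_image_of_injective _ he, card_univ, Fintype.card_sigma]
    simp [hd]
  have hex : ∀ b, ∃ t, ∀ x, e x = b → x.1 = t := by
    intro b
    by_cases h : ∃ x, e x = b
    · obtain ⟨x, rfl⟩ := h
      exact ⟨x.1, fun y hy => by rw [he hy]⟩
    · exact ⟨⟨0, hq⟩, fun x hx => absurd ⟨x, hx⟩ h⟩
  choose F hF using hex
  refine ⟨F, fun b hb => ?_, fun t => ?_⟩
  · rw [← himg] at hb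
    obtain ⟨x, -, rfl⟩ := mem_image.1 hb
    rw [← hF _ x rfl]
    exact (heB x).2
  · have : B.filter (fun b => F b = t) = univ.image fun k : Fin (d t) => e ⟨t, k⟩ := by
      ext b
      rw [mem_filter, mem_image]
      constructor
      · rintro ⟨hb, hbt⟩
        rw [← himg] at hb
        obtain ⟨⟨t', k⟩, -, rfl⟩ := mem_image.1 hb
        obtain rfl : t' = t := (hF _ ⟨t', k⟩ rfl).trans hbt
        exact ⟨k, mem_univ _, rfl⟩
      · rintro ⟨k, -, rfl⟩
        exact ⟨(heB _).1, (hF _ _ rfl).symm⟩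
    rw [this, card_image_of_injective _ fun k k' h => by simpa using he h, card_univ,
      Fintype.card_fin]

lemma exists_change {T : Type*} {f : ℕ → T} {a b : ℕ} (hab : a ≤ b) (hf : f a ≠ f b) :
    ∃ i, a ≤ i ∧ i < b ∧ f i ≠ f (i + 1) := by
  by_contra! h
  apply hf
  clear hf
  induction b, hab using Nat.le_induction with
  | base => rfl
  | succ b hab ih => exact (ih fun i h2 h3 => h i h2 (by omega)).trans (h b hab (by omega))

lemma card_cuts_le {T : Type*} [DecidableEq T] {n M : ℕ} {f F : ℕ → T}
    (h : ∀ b < n, ∃ s, s / M = b ∧ f s = F b) (hM : 0 < M) :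
    (cuts n F).card ≤ (cuts (n * M) f).card := by
  have hex : ∀ b, ∃ s, b < n → s / M = b ∧ f s = F b := by
    intro b
    by_cases hb : b < n
    · exact (h b hb).imp fun s hs _ => hs
    · exact ⟨0, fun h' => absurd h' hb⟩
  choose s hs using hex
  have hmono : ∀ b b', b < b' → b' < n → s b < s b' := by
    intro b b' hb hb'
    by_contra hle
    have := Nat.div_le_div_right (c := M) (not_lt.1 hle)
    rw [(hs b (hb.trans hb')).1, (hs b' hb').1] at this
    omega
  have hch : ∀ b, ∃ i, b ∈ cuts n F → s b ≤ i ∧ i < s (b + 1) ∧ f i ≠ f (i + 1) := by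
    intro b
    by_cases hb : b ∈ cuts n F
    · obtain ⟨h1, h2, h3⟩ := mem_filter.1 hb
      rw [mem_range] at h1
      rw [← (hs b h1).2, ← (hs _ h2).2] at h3
      exact (exists_change (hmono _ _ (Nat.lt_succ_self b) h2).le h3).imp fun i hi _ => hi
    · exact ⟨0, fun h' => absurd h' hb⟩
  choose i hi using hch
  have hcut : ∀ b ∈ cuts n F, b < n ∧ b + 1 < n := by
    intro b hb
    obtain ⟨h1, h2, -⟩ := mem_filter.1 hb
    exact ⟨mem_range.1 h1, h2⟩
  have himono : ∀ b ∈ cuts n F, ∀ b' ∈ cuts n F, b < b' → i b < i b' := by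
    intro b hb b' hb' hlt
    have h1 : s (b + 1) ≤ s b' := by
      rcases Nat.eq_or_lt_of_le (Nat.succ_le_of_lt hlt) with h | h
      · exact (congrArg s h).le
      · exact (hmono _ _ h (hcut b' hb').1).le
    exact ((hi b hb).2.1.trans_le h1).trans_le (hi b' hb').1
  refine card_le_card_of_injOn i ?_ ?_
  · intro b hb
    have hb : b ∈ cuts n F := hb
    obtain ⟨h1, h2, h3⟩ := hi b hb
    have h4 : s (b + 1) < n * M := by
      rw [← Nat.div_lt_iff_lt_mul hM, (hs _ (hcut b hb).2).1]
      exact (hcut b hb).2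
    simp only [cuts, coe_filter, mem_range, Set.mem_ofPred_eq]
    exact ⟨by omega, by omega, h3⟩
  · intro b hb b' hb' h
    rcases lt_trichotomy b b' with hlt | rfl | hlt
    · exact absurd h (himono b hb b' hb' hlt).ne
    · rfl
    · exact absurd h.symm (himono b' hb' b hb hlt).ne

/-- Hall's condition for the prescribed advantages, from the bound given by a fractional fair
splitting. -/
lemma demand_le {q a : ℕ} (hr : a % q = 0 ∨ a % q = 1 ∨ a % q = q - 1)
    {w : Finset (Fin q)} (hw : w.card = a % q) (S : Finset (Fin q)) {x : ℕ}
    (hx : S.card * a ≤ q * x) : ∑ t ∈ S, (a / q + if t ∈ w then 1 else 0) ≤ x := by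
  rcases S.eq_empty_or_nonempty with rfl | hS
  · simp
  have hS0 : 0 < S.card := hS.card_pos
  have hSq : S.card ≤ q := by simpa using card_le_univ S
  have hq : 0 < q := by omega
  rw [sum_add_distrib, sum_const, smul_eq_mul, sum_boole, Nat.cast_id, filter_mem_eq_inter]
  have h1 : (S ∩ w).card ≤ S.card := card_le_card inter_subset_left
  have h2 : (S ∩ w).card ≤ a % q := hw ▸ card_le_card inter_subset_right
  have ha := Nat.div_add_mod a q
  set k := a / q
  set u := (S ∩ w).card
  set σ := S.card
  by_contra! hlt
  have hx1 : x + 1 ≤ σ * k + u := hlt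
  have hx2 : q * x + q ≤ q * (σ * k) + q * u := by
    have := Nat.mul_le_mul_left q hx1
    rw [mul_add, mul_add] at this
    simpa using this
  have hx3 : q * (σ * k) + σ * (a % q) ≤ q * x := by
    calc q * (σ * k) + σ * (a % q) = σ * (q * k + a % q) := by ring
      _ = σ * a := by rw [ha]
      _ ≤ q * x := hx
  have hx4 : σ * (a % q) + q ≤ q * u := by omega
  rcases hr with h | h | h
  · have : u = 0 := by omega
    rw [this] at hx4
    omega
  · have : q * u ≤ q * 1 := Nat.mul_le_mul_left q (by omega)
    rw [h] at hx4
    omega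
  · obtain ⟨b, rfl⟩ : ∃ b, q = b + 1 := ⟨q - 1, by omega⟩
    rw [h] at hx4 h2
    simp only [Nat.add_sub_cancel] at hx4 h2
    nlinarith

end Rounding

theorem exists_split_of_advantage {q m : ℕ} (hq : 0 < q) (n : ℕ) (c : ℕ → Fin m)
    (a : Fin m → ℕ) (ha : ∀ j, a j = ((range n).filter fun i => c i = j).card)
    (hr : ∀ j, a j % q = 0 ∨ a j % q = 1 ∨ a j % q = q - 1)
    (w : Fin m → Finset (Fin q)) (hw : ∀ j, (w j).card = a j % q) :
    ∃ F : ℕ → Fin q, (cuts n F).card ≤ (q - 1) * m ∧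
      ∀ j t, (share n c F j t).card = a j / q + if t ∈ w j then 1 else 0 := by
  obtain ⟨C, hC⟩ := approxSplit_fin m q hq
  rw [Fintype.card_fin] at hC
  set M := q * C + 1 with hM
  obtain ⟨f, hcut, hsh⟩ := hC (n * M) fun i => c (i / M)
  have hM0 : 0 < M := Nat.succ_pos _
  let A (b : ℕ) : Finset (Fin q) := (range M).image fun k => f (b * M + k)
  have hA : ∀ b t, t ∈ A b ↔ ∃ s, s / M = b ∧ f s = t := by
    intro b t
    simp only [A, mem_image, mem_range]
    constructor
    · rintro ⟨k, hk, h⟩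
      refine ⟨b * M + k, ?_, h⟩
      rw [mul_comm, Nat.mul_add_div hM0, Nat.div_eq_of_lt hk, add_zero]
    · rintro ⟨s, rfl, h⟩
      exact ⟨s % M, Nat.mod_lt _ hM0, by rw [Nat.div_add_mod']; exact h⟩
  have key : ∀ j, ∃ F : ℕ → Fin q, (∀ b ∈ (range n).filter (fun i => c i = j), F b ∈ A b) ∧
      ∀ t, (((range n).filter fun i => c i = j).filter fun b => F b = t).card =
        a j / q + if t ∈ w j then 1 else 0 := by
    intro j
    refine exists_assignment hq _ A _ ?_ fun S => demand_le (hr j) (hw j) S ?_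
    · rw [← ha, sum_add_distrib, sum_const, smul_eq_mul, card_univ, Fintype.card_fin, sum_boole,
        Nat.cast_id, filter_mem_eq_inter, univ_inter, hw, Nat.div_add_mod]
    · set B := (range n).filter fun i => c i = j with hB
      set x := (B.filter fun b => ∃ t ∈ S, t ∈ A b).card with hx
      set A' := ((range (n * M)).filter fun i => c (i / M) = j).card with hA'
      have h1 : M * a j ≤ A' := by
        have e : M * a j = (B ×ˢ range M).card := by
          rw [card_product, card_range, ha j, mul_comm]
        rw [e]
        have hdiv : ∀ b k, k < M → (b * M + k) / M = b := by
          intro b k hk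
          rw [mul_comm, Nat.mul_add_div hM0, Nat.div_eq_of_lt hk, add_zero]
        refine card_le_card_of_injOn (fun y => y.1 * M + y.2) ?_ ?_
        · rintro ⟨b, k⟩ hy
          simp only [coe_product, Set.mem_prod, mem_coe, hB, mem_filter, mem_range] at hy
          simp only [coe_filter, mem_range, Set.mem_ofPred_eq]
          rw [hdiv b k hy.2, ← Nat.div_lt_iff_lt_mul hM0, hdiv b k hy.2]
          exact hy.1
        · rintro ⟨b, k⟩ hy ⟨b', k'⟩ hy' h
          simp only [coe_product, Set.mem_prod, mem_coe, mem_range] at hy hy' h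
          have hb : b = b' := by
            rw [← hdiv b k hy.2, h, hdiv b' k' hy'.2]
          subst hb
          simp only [Prod.mk.injEq, true_and]
          omega
      have h2 : ∑ t ∈ S, (share (n * M) (fun i => c (i / M)) f j t).card ≤ M * x := by
        rw [← card_biUnion]
        · refine card_le_mul_card_image_of_maps_to (f := fun i => i / M) ?_ _ ?_
          · intro i hi
            obtain ⟨t, ht, hi⟩ := mem_biUnion.1 hi
            simp only [share, mem_filter, mem_range] at hi
            simp only [hB, mem_filter, mem_range]
            exact ⟨⟨(Nat.div_lt_iff_lt_mul hM0).2 hi.1, hi.2.1⟩, t, ht, (hA _ _).2 ⟨i, rfl, hi.2.2⟩⟩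
          · intro b _
            refine (card_le_card_of_injOn (t := range M) (fun i => i % M) ?_ ?_).trans
              (card_range M).le
            · intro i _
              simpa using Nat.mod_lt _ hM0
            · intro i hi i' hi' h
              have e1 := (mem_filter.1 hi).2
              have e2 := (mem_filter.1 hi').2
              simp only at h e1 e2
              rw [← Nat.div_add_mod i M, ← Nat.div_add_mod i' M, e1, e2, h]
        · intro t _ t' _ hne
          rw [Function.onFun, Finset.disjoint_left]
          intro i hi hi'
          exact hne ((mem_filter.1 hi).2.2.symm.trans (mem_filter.1 hi').2.2)
      have h3 := sum_card_share (n * M) (fun i => c (i / M)) f j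
      rw [← sum_add_sum_compl S, ← hA'] at h3
      have h4 : q * ∑ t ∈ Sᶜ, (share (n * M) (fun i => c (i / M)) f j t).card ≤
          (q - S.card) * (A' + C) := by
        rw [mul_sum]
        refine (sum_le_card_nsmul _ _ _ fun t _ => hsh j t).trans ?_
        rw [card_compl, Fintype.card_fin, smul_eq_mul]
      have hSq : S.card ≤ q := by simpa using card_le_univ S
      obtain ⟨d, hd⟩ := Nat.exists_eq_add_of_le hSq
      have hd' : q - S.card = d := by omega
      rw [hd'] at h4
      set s₁ := ∑ t ∈ S, (share (n * M) (fun i => c (i / M)) f j t).card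
      set s₂ := ∑ t ∈ Sᶜ, (share (n * M) (fun i => c (i / M)) f j t).card
      have h5 : q * A' ≤ q * (M * x) + d * (A' + C) := by
        rw [← h3, mul_add]
        exact Nat.add_le_add (Nat.mul_le_mul_left _ h2) (by rw [h3]; exact h4)
      have h6 : S.card * (M * a j) ≤ q * (M * x) + q * C := by
        have h7 : S.card * (M * a j) ≤ S.card * A' := Nat.mul_le_mul_left _ h1
        have h8 : d * C ≤ q * C := Nat.mul_le_mul_right _ (by omega)
        have h9 : q * A' = S.card * A' + d * A' := by
          conv_lhs => rw [hd]
          ring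
        rw [mul_add] at h5
        omega
      have h10 : M * (S.card * a j) < M * (q * x + 1) := by
        calc M * (S.card * a j) = S.card * (M * a j) := by ring
          _ ≤ q * (M * x) + q * C := h6
          _ < q * (M * x) + M := by omega
          _ = M * (q * x + 1) := by ring
      exact Nat.lt_succ_iff.1 (Nat.lt_of_mul_lt_mul_left h10)
  choose G hG₁ hG₂ using key
  refine ⟨fun b => G (c b) b, (card_cuts_le (fun b hb => ?_) hM0).trans hcut, fun j t => ?_⟩
  · exact (hA _ _).1 (hG₁ (c b) b (mem_filter.2 ⟨mem_range.2 hb, rfl⟩))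
  · rw [← hG₂ j t, filter_filter, share]
    congr 1
    refine filter_congr fun b _ => and_congr_right fun h => ?_
    rw [h]

/-- Theorem 3 (necklace splitting with advantages): a necklace is a sequence of
`n` beads colored by `c : Fin n → Fin m`, with `a j` beads of color `j`. If the
remainder of each `a j` modulo `q` lies in `{0, 1, q-1}`, then for any
prescription `w j` of the set of thieves who are to receive `⌈a j / q⌉` beads
of color `j` (with `|w j| = a j % q`), there is an assignment `f` of beads to
thieves with at most `(q-1)m` cuts realizing the prescription. -/
theorem necklace_advantage (q n m : ℕ) (hq : 0 < q) (c : Fin n → Fin m)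
    (a : Fin m → ℕ) (ha : ∀ j, a j = Nat.card {i : Fin n // c i = j})
    (hr : ∀ j, a j % q = 0 ∨ a j % q = 1 ∨ a j % q = q - 1)
    (w : Fin m → Finset (Fin q)) (hw : ∀ j, (w j).card = a j % q) :
    ∃ f : Fin n → Fin q,
      Nat.card {i : Fin n // ∃ h : (i : ℕ) + 1 < n, f i ≠ f ⟨(i : ℕ) + 1, h⟩} ≤
        (q - 1) * m ∧
      ∀ (j : Fin m) (t : Fin q),
        Nat.card {i : Fin n // c i = j ∧ f i = t} =
          a j / q + if t ∈ w j then 1 else 0 := by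
  have hcard : ∀ P : ℕ → Prop, ∀ [DecidablePred P],
      Nat.card {i : Fin n // P i} = ((range n).filter P).card := by
    intro P _
    rw [Nat.card_eq_fintype_card, Fintype.card_subtype, ← card_map Fin.valEmbedding]
    congr 1
    ext x
    simp only [mem_map, mem_filter, mem_univ, true_and, Fin.valEmbedding_apply, mem_range]
    exact ⟨fun ⟨i, hi, h⟩ => h ▸ ⟨i.2, hi⟩, fun ⟨hx, h⟩ => ⟨⟨x, hx⟩, h, rfl⟩⟩
  rcases Nat.eq_zero_or_pos n with rfl | hn
  · have hempty : ∀ P : Fin 0 → Prop, Nat.card {i : Fin 0 // P i} = 0 := fun P =>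
      Nat.card_of_isEmpty
    have ha0 : ∀ j, a j = 0 := fun j => (ha j).trans (hempty _)
    have hw0 : ∀ j, w j = ∅ := fun j => by
      rw [← card_eq_zero, hw, ha0, Nat.zero_mod]
    refine ⟨fun i => i.elim0, by rw [hempty]; exact Nat.zero_le _, fun j t => ?_⟩
    rw [hempty, ha0, hw0, Nat.zero_div]
    simp
  · let c' : ℕ → Fin m := fun i => if h : i < n then c ⟨i, h⟩ else c ⟨0, hn⟩
    have hc' : ∀ i : Fin n, c' i = c i := fun i => by simp [c']
    have ha' : ∀ j, a j = ((range n).filter fun i => c' i = j).card := by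
      intro j
      rw [ha, ← hcard fun i => c' i = j]
      simp only [hc']
    obtain ⟨F, h1, h2⟩ := exists_split_of_advantage hq n c' a ha' hr w hw
    refine ⟨fun i => F i, ?_, fun j t => ?_⟩
    · rw [cuts, ← hcard fun i => i + 1 < n ∧ F i ≠ F (i + 1)] at h1
      simpa only [exists_prop] using h1
    · rw [← h2 j t, share, ← hcard fun i => c' i = j ∧ F i = t]
      simp only [hc']
end
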